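/- arXiv:1305.2325 — 2 statements merged into one kernel-verified Lean document; each statement's English description precedes it below -/
import Mathlib

section
/- Let w = (w_n)_{n∈ℤ} be a sequence of positive reals bounded above and bounded below away from 0. Then the bilateral weighted shift B_w is frequently hypercyclic on ℓ^p(ℤ) if and only if its inverse B_w^{-1} is frequently hypercyclic on ℓ^p(ℤ). -/
open Filter Topology
open scoped Classical ENNReal

noncomputable def upperDensity (A : Set ℕ) : ℝ :=
  limsup (fun n : ℕ => (((Finset.range (n+1)).filter (· ∈ A)).card : ℝ) / (n+1)) atTop

noncomputable def lowerDensity (A : Set ℕ) : ℝ :=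
  liminf (fun n : ℕ => (((Finset.range (n+1)).filter (· ∈ A)).card : ℝ) / (n+1)) atTop

noncomputable def upperDensityZ (A : Set ℤ) : ℝ :=
  limsup (fun n : ℕ => (((Finset.Icc (-(n:ℤ)) (n:ℤ)).filter (· ∈ A)).card : ℝ) / (2*n+1)) atTop

def freqHCVec {X : Type*} [NormedAddCommGroup X] [NormedSpace ℝ X]
    (T : X →L[ℝ] X) (x : X) : Prop :=
  ∀ U : Set X, IsOpen U → U.Nonempty → 0 < lowerDensity {n : ℕ | (T ^ n) x ∈ U}

def uFreqHCVec {X : Type*} [NormedAddCommGroup X] [NormedSpace ℝ X]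
    (T : X →L[ℝ] X) (x : X) : Prop :=
  ∀ U : Set X, IsOpen U → U.Nonempty → 0 < upperDensity {n : ℕ | (T ^ n) x ∈ U}


theorem lowerDensity_pos_iff (A : Set ℕ) : 0 < lowerDensity A ↔
    ∃ d : ℝ, 0 < d ∧ ∀ᶠ n : ℕ in atTop,
      d * (n + 1) ≤ (((Finset.range (n+1)).filter (· ∈ A)).card : ℝ) := by
  unfold lowerDensity
  have hb : ∀ n : ℕ, 0 ≤ (((Finset.range (n+1)).filter (· ∈ A)).card : ℝ) / (n+1) := by
    intro n; positivity
  have hb1 : ∀ n : ℕ, (((Finset.range (n+1)).filter (· ∈ A)).card : ℝ) / (n+1) ≤ 1 := by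
    intro n
    rw [div_le_one (by positivity)]
    have := Finset.card_filter_le (Finset.range (n+1)) (· ∈ A)
    rw [Finset.card_range] at this
    exact_mod_cast this
  constructor
  · intro h
    refine ⟨_, half_pos h, ?_⟩
    have := eventually_lt_of_lt_liminf (half_lt_self h) ⟨0, by simpa using ⟨0, fun n _ => hb n⟩⟩
    filter_upwards [this] with n hn
    rw [lt_div_iff₀ (by positivity)] at hn
    exact hn.le
  · rintro ⟨d, hd, h⟩
    refine lt_of_lt_of_le hd (le_liminf_of_le ?_ ?_)
    · apply Filter.IsBoundedUnder.isCoboundedUnder_ge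
      exact ⟨1, by simpa using ⟨0, fun n _ => hb1 n⟩⟩
    · filter_upwards [h] with n hn
      rw [le_div_iff₀ (by positivity)]
      exact hn

def cc (B : Finset ℤ) (k : ℤ) : ℕ := (B.filter (fun n => n + k ∈ B)).card

theorem cc_neg (B : Finset ℤ) (k : ℤ) : cc B (-k) = cc B k := by
  unfold cc
  refine Finset.card_bij (fun n _ => n - k) ?_ ?_ ?_
  · intro a ha
    simp only [Finset.mem_filter] at ha ⊢
    refine ⟨by simpa [sub_eq_add_neg] using ha.2, by simpa using ha.1⟩
  · intro a _ b _ h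
    simpa using h
  · intro b hb
    simp only [Finset.mem_filter] at hb
    exact ⟨b + k, by simp [hb.1, hb.2], by simp⟩

theorem cc_cs (B K D : Finset ℤ) (hD : ∀ b ∈ B, ∀ k ∈ K, b + k ∈ D) :
    ((K.card : ℝ) * B.card) ^ 2 ≤ D.card * ∑ k ∈ K, ∑ k' ∈ K, (cc B (k - k') : ℝ) := by
  have h := sq_sum_le_card_mul_sum_sq (s := D)
    (f := fun x => ∑ k ∈ K, if x - k ∈ B then (1:ℝ) else 0)
  have h1 : ∑ x ∈ D, ∑ k ∈ K, (if x - k ∈ B then (1:ℝ) else 0) = K.card * B.card := by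
    rw [Finset.sum_comm]
    rw [← nsmul_eq_mul, ← Finset.sum_const]
    refine Finset.sum_congr rfl fun k hk => ?_
    rw [Finset.sum_boole]
    congr 1
    refine Finset.card_bij (fun n _ => n - k) ?_ ?_ ?_
    · intro a ha
      exact (Finset.mem_filter.1 ha).2
    · intro a _ b _ h
      simpa using h
    · intro b hb
      exact ⟨b + k, by simp [hb, hD b hb k hk], by simp⟩
  have h2 : ∑ x ∈ D, (∑ k ∈ K, (if x - k ∈ B then (1:ℝ) else 0)) ^ 2
      = ∑ k ∈ K, ∑ k' ∈ K, (cc B (k - k') : ℝ) := by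
    simp_rw [sq, Finset.sum_mul_sum]
    rw [Finset.sum_comm]
    refine Finset.sum_congr rfl fun k hk => ?_
    rw [Finset.sum_comm]
    refine Finset.sum_congr rfl fun k' hk' => ?_
    have hite : ∀ x : ℤ, (if x - k ∈ B then (1:ℝ) else 0) * (if x - k' ∈ B then (1:ℝ) else 0)
        = if (x - k ∈ B ∧ x - k' ∈ B) then 1 else 0 := by
      intro x; by_cases h : x - k ∈ B <;> simp [h]
    simp_rw [hite]
    rw [Finset.sum_boole]
    congr 1
    unfold cc
    refine Finset.card_bij (fun n _ => n - k) ?_ ?_ ?_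
    · intro a ha
      simp only [Finset.mem_filter] at ha ⊢
      exact ⟨ha.2.1, by simpa using ha.2.2⟩
    · intro a _ b _ h
      simpa using h
    · intro b hb
      simp only [Finset.mem_filter] at hb
      refine ⟨b + k, ?_, by simp⟩
      simp only [Finset.mem_filter]
      refine ⟨hD b hb.1 k hk, by simpa using hb.1, ?_⟩
      convert hb.2 using 1
      ring
  rw [h1, h2] at h
  exact h

set_option maxHeartbeats 2000000 in
theorem comb (B : ℕ → Finset ℤ) (hB : ∀ N, B N ⊆ Finset.Icc 0 (N:ℤ)) (d : ℝ) (hd : 0 < d)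
    (hdB : ∀ᶠ N : ℕ in atTop, d * (N + 1) ≤ ((B N).card : ℝ))
    (u : ℤ → ℝ) (hu : ∀ k, 0 ≤ u k) (M : ℝ)
    (hM : ∀ N, ∀ n ∈ B N, ∑ m ∈ B N, u (m - n) ≤ M)
    (hK : ∀ m : ℤ, ∃ Q : ℝ, ∀ k, u k ≤ Q * u (k + m)) : Summable u := by
  have hcard : ∀ N : ℕ, ((B N).card : ℝ) ≤ N + 1 := by
    intro N
    have := Finset.card_le_card (hB N)
    rw [Int.card_Icc] at this
    have h2 : (B N).card ≤ N + 1 := by omega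
    exact_mod_cast h2
  obtain ⟨η, hη⟩ : ∃ η : ℝ, η = d ^ 2 / 4 := ⟨_, rfl⟩
  have hη0 : 0 < η := by rw [hη]; positivity
  have hdB' : ∀ᶠ N : ℕ in (hyperfilter ℕ : Filter ℕ), d * (N + 1) ≤ ((B N).card : ℝ) :=
    hdB.filter_mono Nat.hyperfilter_le_atTop
  let P : ℤ → Prop := fun k => ∀ᶠ N : ℕ in (hyperfilter ℕ : Filter ℕ),
    (cc (B N) k : ℝ) ≤ η * (N + 1)
  have hPneg : ∀ k, P (-k) → P k := by
    intro k h
    simpa only [P, cc_neg] using h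
  have hd1 : d ≤ 1 := by
    obtain ⟨N, hN⟩ := hdB.exists
    have := hN.trans (hcard N)
    have h3 : (0:ℝ) < N + 1 := by positivity
    nlinarith
  have hP0 : ¬ P 0 := by
    intro h
    obtain ⟨N, h1, h2⟩ := (h.and hdB').exists
    have : cc (B N) 0 = (B N).card := by simp [cc]
    rw [this] at h1
    have h3 : (0:ℝ) < N + 1 := by positivity
    have : d ≤ η := le_of_mul_le_mul_right (h2.trans h1) h3
    nlinarith
  -- bounded families
  have hbd : ∀ K : Finset ℤ, (∀ k ∈ K, ∀ k' ∈ K, k ≠ k' → P (k - k')) →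
      (K.card : ℝ) ≤ 4 / d ^ 2 := by
    intro K hKP
    obtain ⟨b, hb⟩ : ∃ b : ℕ, ∀ k ∈ K, |k| ≤ b :=
      ⟨K.sup Int.natAbs, fun k hk => by
        have := Finset.le_sup (f := Int.natAbs) hk
        rw [Int.abs_eq_natAbs]
        exact_mod_cast this⟩
    have hall : ∀ᶠ N : ℕ in (hyperfilter ℕ : Filter ℕ), ∀ k ∈ K, ∀ k' ∈ K, k ≠ k' →
        (cc (B N) (k - k') : ℝ) ≤ η * (N + 1) := by
      rw [eventually_all_finset]
      intro k hk
      rw [eventually_all_finset]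
      intro k' hk'
      by_cases h : k = k'
      · simp [h]
      · simpa [h] using hKP k hk k' hk' h
    have hbig : ∀ᶠ N : ℕ in (hyperfilter ℕ : Filter ℕ), 2 * b ≤ N :=
      (eventually_ge_atTop (2 * b)).filter_mono Nat.hyperfilter_le_atTop
    obtain ⟨N, ⟨h1, h2⟩, h3⟩ := ((hall.and hdB').and hbig).exists
    have hcs := cc_cs (B N) K (Finset.Icc (-(b:ℤ)) (N + b)) (by
      intro x hx k hk
      have := Finset.mem_Icc.1 (hB N hx)
      have := abs_le.1 (hb k hk)
      rw [Finset.mem_Icc]; constructor <;> linarith)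
    have hD : (((Finset.Icc (-(b:ℤ)) (N + b)).card : ℕ) : ℝ) ≤ 2 * (N + 1) := by
      rw [Int.card_Icc]
      have : ((N:ℤ) + b + 1 - -(b:ℤ)).toNat ≤ 2 * (N + 1) := by omega
      exact_mod_cast this
    have hsum : ∑ k ∈ K, ∑ k' ∈ K, (cc (B N) (k - k') : ℝ)
        ≤ K.card * ((N + 1) + K.card * (η * (N + 1))) := by
      rw [← nsmul_eq_mul]
      refine Finset.sum_le_card_nsmul _ _ _ fun k hk => ?_
      have : ∀ k' ∈ K, (cc (B N) (k - k') : ℝ) ≤ (if k = k' then (N + 1 : ℝ) else 0) + η * (N + 1) := by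
        intro k' hk'
        by_cases h : k = k'
        · rw [if_pos h]
          have : (cc (B N) (k - k') : ℝ) ≤ (B N).card := by
            exact_mod_cast Finset.card_filter_le _ _
          have := hcard N
          have : 0 ≤ η * (N + 1) := by positivity
          linarith
        · rw [if_neg h, zero_add]
          exact h1 k hk k' hk' h
      refine (Finset.sum_le_sum this).trans ?_
      rw [Finset.sum_add_distrib, Finset.sum_ite_eq, if_pos hk, Finset.sum_const, nsmul_eq_mul]
    obtain ⟨r, hr⟩ : ∃ r : ℝ, r = K.card := ⟨_, rfl⟩
    have hr0 : 0 ≤ r := by rw [hr]; positivity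
    rw [← hr] at hcs hsum ⊢
    have hn : (0:ℝ) < N + 1 := by positivity
    obtain ⟨n, hn'⟩ : ∃ n : ℝ, n = N + 1 := ⟨_, rfl⟩
    rw [← hn'] at hsum hn h2 hD
    have e1 : (r * (d * n)) ^ 2 ≤ (2 * n) * (r * (n + r * (η * n))) := by
      calc (r * (d * n)) ^ 2 ≤ (r * (B N).card) ^ 2 := by gcongr
        _ ≤ _ := hcs
        _ ≤ _ := by gcongr
    have e2 : r ^ 2 * d ^ 2 ≤ 2 * (r + r ^ 2 * η) := by
      have : 0 < n ^ 2 := by positivity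
      refine le_of_mul_le_mul_right ?_ this
      nlinarith
    rw [le_div_iff₀ (by positivity)]
    rcases hr0.eq_or_lt with h0 | h0
    · rw [← h0]; norm_num
    · refine le_of_mul_le_mul_right ?_ h0
      rw [hη] at e2
      nlinarith
  obtain ⟨K, hKP, hKmax⟩ : ∃ K : Finset ℤ, (∀ k ∈ K, ∀ k' ∈ K, k ≠ k' → P (k - k')) ∧
      ∀ k, ∃ i ∈ K, ¬ P (k - i) := by
    by_contra hcon
    push Not at hcon
    have : ∀ n : ℕ, ∃ K : Finset ℤ, (∀ k ∈ K, ∀ k' ∈ K, k ≠ k' → P (k - k')) ∧ K.card = n := by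
      intro n
      induction n with
      | zero => exact ⟨∅, by simp, by simp⟩
      | succ n ih =>
        obtain ⟨K, h1, h2⟩ := ih
        obtain ⟨k, hk⟩ := hcon K h1
        have hkK : k ∉ K := fun h => hP0 (by simpa using hk k h)
        refine ⟨insert k K, ?_, by rw [Finset.card_insert_of_notMem hkK, h2]⟩
        intro a ha b hb hab
        rcases Finset.mem_insert.1 ha with ha | ha
        · rcases Finset.mem_insert.1 hb with hb | hb
          · exact absurd (ha.trans hb.symm) hab
          · rw [ha]; exact hk b hb
        · rcases Finset.mem_insert.1 hb with hb | hb
          · apply hPneg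
            rw [hb]
            simpa using hk a ha
          · exact h1 a ha b hb hab
    obtain ⟨n, hn⟩ := exists_nat_gt (4 / d ^ 2)
    obtain ⟨K, h1, h2⟩ := this n
    have := hbd K h1
    rw [h2] at this
    linarith
  let v : ℤ → ℝ := fun k => if P k then 0 else u k
  have hv0 : ∀ k, 0 ≤ v k := fun k => by
    simp only [v]; split_ifs; exacts [le_rfl, hu k]
  have hv : Summable v := by
    refine summable_of_sum_le (c := |M| / η) hv0 fun F => ?_
    have e0 : ∑ k ∈ F, v k = ∑ k ∈ F.filter (fun k => ¬ P k), u k := by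
      rw [Finset.sum_filter]
      refine Finset.sum_congr rfl fun k _ => ?_
      simp only [v]; by_cases h : P k <;> simp [h]
    rw [e0]
    set G := F.filter (fun k => ¬ P k) with hG
    have hall : ∀ᶠ N : ℕ in (hyperfilter ℕ : Filter ℕ), ∀ k ∈ G, 
        ¬ (cc (B N) k : ℝ) ≤ η * (N + 1) := by
      rw [eventually_all_finset]
      intro k hk
      rw [Ultrafilter.eventually_not]
      exact (Finset.mem_filter.1 hk).2
    obtain ⟨N, hN⟩ := hall.exists
    rw [le_div_iff₀ hη0]
    have hn : (0:ℝ) < N + 1 := by positivity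
    refine le_of_mul_le_mul_right ?_ hn
    calc (∑ k ∈ G, u k) * η * (N + 1) = ∑ k ∈ G, u k * (η * (N + 1)) := by
          rw [mul_assoc, Finset.sum_mul]
      _ ≤ ∑ k ∈ G, u k * (cc (B N) k : ℝ) := by
          refine Finset.sum_le_sum fun k hk => ?_
          exact mul_le_mul_of_nonneg_left (not_le.1 (hN k hk)).le (hu k)
      _ = ∑ k ∈ G, ∑ n ∈ B N, if n + k ∈ B N then u k else 0 := by
          refine Finset.sum_congr rfl fun k hk => ?_
          rw [← Finset.sum_filter, Finset.sum_const, nsmul_eq_mul, mul_comm]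
          rfl
      _ = ∑ n ∈ B N, ∑ k ∈ G, if n + k ∈ B N then u k else 0 := Finset.sum_comm
      _ ≤ ∑ n ∈ B N, M := by
          refine Finset.sum_le_sum fun n hn => ?_
          refine le_trans ?_ (hM N n hn)
          rw [← Finset.sum_filter]
          have : ∑ k ∈ G.filter (fun k => n + k ∈ B N), u k
              = ∑ m ∈ (G.filter (fun k => n + k ∈ B N)).image (fun k => n + k), u (m - n) := by
            rw [Finset.sum_image (by intro a _ b _ h; simpa using h)]
            simp
          rw [this]
          refine Finset.sum_le_sum_of_subset_of_nonneg ?_ fun _ _ _ => hu _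
          intro m hm
          obtain ⟨k, hk, rfl⟩ := Finset.mem_image.1 hm
          exact (Finset.mem_filter.1 hk).2
      _ = (B N).card * M := by rw [Finset.sum_const, nsmul_eq_mul]
      _ ≤ |M| * (N + 1) := by
          rw [mul_comm]
          exact mul_le_mul (le_abs_self M) (hcard N) (by positivity) (abs_nonneg M)
  choose Q hQ using hK
  have hs : Summable (fun k => ∑ i ∈ K, |Q (-i)| * v (k + -i)) := by
    refine summable_sum fun i _ => ?_
    refine Summable.mul_left _ ?_
    exact (Equiv.addRight (-i)).summable_iff.2 hv
  refine Summable.of_nonneg_of_le hu (fun k => ?_) hs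
  obtain ⟨i, hi, hPi⟩ := hKmax k
  have h1 : u k ≤ |Q (-i)| * v (k + -i) := by
    have : v (k + -i) = u (k + -i) := by
      simp only [v]
      rw [if_neg (by simpa [sub_eq_add_neg] using hPi)]
    rw [this]
    refine (hQ (-i) k).trans ?_
    exact mul_le_mul_of_nonneg_right (le_abs_self _) (hu _)
  refine h1.trans ?_
  exact Finset.single_le_sum (f := fun i => |Q (-i)| * v (k + -i))
    (fun i _ => mul_nonneg (abs_nonneg _) (hv0 _)) hi

theorem density_of_seq (A : Set ℕ) (a : ℕ → ℕ) (ha : Function.Injective a) (D : ℕ) (hD : 1 ≤ D)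
    (haD : ∀ t, a t ≤ D * (t + 1)) (haA : ∀ t, a t ∈ A) : 0 < lowerDensity A := by
  rw [lowerDensity_pos_iff]
  have hD' : (0:ℝ) < D := by exact_mod_cast hD
  refine ⟨1 / (2 * D), by positivity, ?_⟩
  filter_upwards [eventually_ge_atTop D] with n hn
  have h1 : n / D ≤ ((Finset.range (n+1)).filter (· ∈ A)).card := by
    have : ((Finset.range (n / D)).image a) ⊆ ((Finset.range (n+1)).filter (· ∈ A)) := by
      intro x hx
      obtain ⟨t, ht, rfl⟩ := Finset.mem_image.1 hx
      rw [Finset.mem_filter, Finset.mem_range]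
      refine ⟨?_, haA t⟩
      have h2 : t + 1 ≤ n / D := Finset.mem_range.1 ht
      have h3 : D * (t + 1) ≤ n := (Nat.mul_le_mul_left D h2).trans (Nat.mul_div_le n D)
      have := haD t
      omega
    have := Finset.card_le_card this
    rwa [Finset.card_image_of_injective _ ha, Finset.card_range] at this
  have h2 : n + 1 ≤ 2 * D * (n / D) := by
    have e1 := Nat.div_add_mod n D
    have e2 := Nat.mod_lt n (show 0 < D by omega)
    have e3 : 1 ≤ n / D := (Nat.one_le_div_iff (by omega)).2 hn
    nlinarith
  have h3 : ((n:ℝ) + 1) ≤ 2 * D * ((n / D : ℕ) : ℝ) := by exact_mod_cast h2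
  have h4 : ((n / D : ℕ) : ℝ) ≤ ((Finset.range (n+1)).filter (· ∈ A)).card := by exact_mod_cast h1
  rw [div_mul_eq_mul_div, div_le_iff₀ (by positivity)]
  nlinarith

theorem sep (N : ℕ → ℕ) (hN : ∀ l, 1 ≤ N l) : ∃ n lev : ℕ → ℕ,
    (∀ i j, i ≠ j → ((N (lev i) : ℤ) + N (lev j)) ≤ |(n i : ℤ) - n j|) ∧
    (∀ j, N (lev j) ≤ n j) ∧
    ∀ l, 0 < lowerDensity {m | ∃ j, lev j = l ∧ n j = m} := by
  let q : ℕ → ℕ := fun l => 2 ^ l * ∏ i ∈ Finset.range l, (N (i + 1) + 1)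
  have hq0 : q 0 = 1 := by simp [q]
  have hqs : ∀ l, q (l + 1) = q l * (2 * (N (l + 1) + 1)) := by
    intro l; simp only [q, Finset.prod_range_succ, pow_succ]; ring
  have hqpow : ∀ l, 2 ^ l ≤ q l := by
    intro l
    exact Nat.le_mul_of_pos_right _ (Finset.prod_pos fun i _ => by omega)
  have hqpos : ∀ l, 0 < q l := fun l => lt_of_lt_of_le (by positivity) (hqpow l)
  have hqdvd : ∀ l l', l ≤ l' → q l ∣ q l' := by
    intro l l' h
    induction h with
    | refl => exact dvd_rfl
    | step _ ih => exact ih.trans (by rw [hqs]; exact dvd_mul_right _ _)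
  have hqN : ∀ l, N l * 2 ^ l ≤ (N 0 + 1) * q l := by
    intro l
    cases l with
    | zero => simp [hq0]
    | succ l =>
      rw [hqs, pow_succ]
      have := hqpow l
      calc N (l+1) * (2 ^ l * 2) ≤ N (l+1) * (q l * 2) := by gcongr
        _ ≤ (N (l+1) + 1) * (q l * 2) := by gcongr; omega
        _ = 1 * (q l * (2 * (N (l + 1) + 1))) := by ring
        _ ≤ _ := by gcongr; omega
  let lev : ℕ → ℕ := fun j => Nat.findGreatest (fun l => q l ∣ j + 1) (j + 1)
  let P : ℕ → ℕ := fun j => ∑ i ∈ Finset.range j, 2 * N (lev i)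
  let n : ℕ → ℕ := fun j => P j + N (lev j)
  have hPs : ∀ j, P (j + 1) = P j + 2 * N (lev j) := fun j => Finset.sum_range_succ _ _
  have hPmono : Monotone P := monotone_nat_of_le_succ fun j => by rw [hPs]; omega
  have hlt : ∀ i j, i < j → n i + N (lev i) + N (lev j) ≤ n j := by
    intro i j hij
    have h1 := hPmono (show i + 1 ≤ j from hij)
    rw [hPs] at h1
    simp only [n]
    omega
  have hlevdvd : ∀ j, q (lev j) ∣ j + 1 := by
    intro j
    exact Nat.findGreatest_spec (P := fun l => q l ∣ j + 1) (Nat.zero_le _) (by simp [hq0])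
  have hlevle : ∀ j, lev j ≤ j + 1 := fun j => Nat.findGreatest_le _
  have hsum : ∀ j, P j ≤ 4 * (N 0 + 1) * j := by
    intro j
    have h1 : ∑ i ∈ Finset.range j, N (lev i) ≤ ∑ l ∈ Finset.range (j + 1), N l * (j / q l) := by
      calc ∑ i ∈ Finset.range j, N (lev i)
          ≤ ∑ i ∈ Finset.range j, ∑ l ∈ Finset.range (j + 1), (if q l ∣ i + 1 then N l else 0) := by
            refine Finset.sum_le_sum fun i hi => ?_
            have hi' := Finset.mem_range.1 hi
            have := Finset.single_le_sum (f := fun l => if q l ∣ i + 1 then N l else 0)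
              (s := Finset.range (j + 1)) (fun _ _ => Nat.zero_le _)
              (Finset.mem_range.2 (show lev i < j + 1 by have := hlevle i; omega))
            rwa [if_pos (hlevdvd i)] at this
        _ = _ := by
            rw [Finset.sum_comm]
            refine Finset.sum_congr rfl fun l _ => ?_
            rw [← Finset.sum_filter, Finset.sum_const, Nat.card_multiples, smul_eq_mul, mul_comm]
    have h2 : ((∑ i ∈ Finset.range j, N (lev i) : ℕ) : ℝ) ≤ 2 * (N 0 + 1) * j := by
      calc ((∑ i ∈ Finset.range j, N (lev i) : ℕ) : ℝ)
          ≤ ((∑ l ∈ Finset.range (j + 1), N l * (j / q l) : ℕ) : ℝ) := by exact_mod_cast h1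
        _ = ∑ l ∈ Finset.range (j + 1), (N l : ℝ) * ((j / q l : ℕ) : ℝ) := by push_cast; rfl
        _ ≤ ∑ l ∈ Finset.range (j + 1), ((N 0 + 1) * j : ℝ) * (1 / 2) ^ l := by
            refine Finset.sum_le_sum fun l _ => ?_
            have e1 : ((j / q l : ℕ) : ℝ) ≤ j / q l := Nat.cast_div_le
            have e2 : (N l : ℝ) * 2 ^ l ≤ (N 0 + 1) * q l := by exact_mod_cast hqN l
            have e3 : (0:ℝ) < q l := by exact_mod_cast hqpos l
            calc (N l : ℝ) * ((j / q l : ℕ) : ℝ) ≤ N l * (j / q l) := by gcongr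
              _ = (N l * 2 ^ l) * (j / q l) * (1 / 2) ^ l := by
                  rw [one_div, inv_pow]; field_simp
              _ ≤ ((N 0 + 1) * q l) * (j / q l) * (1 / 2) ^ l := by gcongr
              _ = _ := by field_simp
        _ = ((N 0 + 1) * j : ℝ) * ∑ l ∈ Finset.range (j + 1), (1 / 2 : ℝ) ^ l := by
            rw [Finset.mul_sum]
        _ ≤ ((N 0 + 1) * j : ℝ) * 2 := by
            gcongr
            exact sum_geometric_two_le _
        _ = _ := by ring
    have h3 : ∑ i ∈ Finset.range j, N (lev i) ≤ 2 * (N 0 + 1) * j := by exact_mod_cast h2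
    simp only [P]
    rw [← Finset.mul_sum]
    nlinarith
  have hinj : Function.Injective n := by
    refine StrictMono.injective fun i j hij => ?_
    have := hlt i j hij
    have := hN (lev i)
    omega
  refine ⟨n, lev, ?_, ?_, ?_⟩
  · intro i j hij
    rcases lt_or_gt_of_ne hij with h | h
    · have := hlt i j h
      rw [abs_sub_comm, le_abs]
      left; push_cast; omega
    · have := hlt j i h
      rw [le_abs]
      left; push_cast; omega
  · intro j; simp only [n]; omega
  · intro l
    have hj : ∀ t, q l + t * q (l + 1) - 1 + 1 = q l + t * q (l + 1) := by
      intro t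
      have := hqpos l
      have := Nat.zero_le (t * q (l + 1))
      omega
    refine density_of_seq _ (fun t => n (q l + t * q (l + 1) - 1)) ?_ (4 * (N 0 + 1) * q (l + 1)) ?_ ?_ ?_
    · intro s t hst
      have h1 := hinj hst
      have h2 : q l + s * q (l + 1) = q l + t * q (l + 1) := by rw [← hj s, ← hj t, h1]
      exact Nat.eq_of_mul_eq_mul_right (hqpos (l + 1)) (by omega)
    · have := hqpos (l + 1)
      exact Nat.mul_pos (by omega) this
    · intro t
      set j := q l + t * q (l + 1) - 1 with hjdef
      have h1 : n j ≤ P (j + 1) := by rw [hPs]; simp only [n]; omega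
      refine (h1.trans (hsum _)).trans ?_
      rw [hj t, mul_assoc (4 * (N 0 + 1)) (q (l + 1))]
      refine Nat.mul_le_mul_left _ ?_
      have : q l ≤ q (l + 1) := Nat.le_of_dvd (hqpos _) (hqdvd _ _ (by omega))
      nlinarith
    · intro t
      refine ⟨_, ?_, rfl⟩
      set j := q l + t * q (l + 1) - 1 with hjdef
      have hjj := hj t
      rw [← hjdef] at hjj
      apply le_antisymm
      · by_contra hcon
        push Not at hcon
        have h1 : q (l + 1) ∣ j + 1 := (hqdvd _ _ hcon).trans (hlevdvd j)
        rw [hjj] at h1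
        have h2 : q (l + 1) ∣ q l := (Nat.dvd_add_left (dvd_mul_left _ _)).1 h1
        have h3 := Nat.le_of_dvd (hqpos l) h2
        rw [hqs] at h3
        have := hqpos l
        nlinarith [Nat.zero_le (N (l+1))]
      · refine Nat.le_findGreatest ?_ ?_
        · rw [hjj]
          have := hqpow l
          have := Nat.lt_two_pow_self (n := l)
          have := Nat.zero_le (t * q (l + 1))
          omega
        · show q l ∣ j + 1
          rw [hjj]
          exact dvd_add dvd_rfl ((hqdvd _ _ (by omega)).mul_left _)

theorem tail_small (u : ℤ → ℝ) (hu : Summable u) (ε : ℝ) (hε : 0 < ε) :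
    ∃ M : ℕ, ∀ F : Finset ℤ, (∀ k ∈ F, (M : ℤ) ≤ |k|) → ∑ k ∈ F, u k < ε := by
  obtain ⟨s, hs⟩ := summable_iff_vanishing_norm.1 hu ε hε
  refine ⟨s.sup Int.natAbs + 1, fun F hF => ?_⟩
  have := hs F (Finset.disjoint_left.2 fun k hk hks => by
    have h1 := hF k hk
    have h2 := Finset.le_sup (f := Int.natAbs) hks
    rw [Int.abs_eq_natAbs] at h1
    have h3 : s.sup Int.natAbs + 1 ≤ k.natAbs := by exact_mod_cast h1
    omega)
  exact (le_abs_self _).trans_lt this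

theorem core (u : ℤ → ℝ) (hu0 : ∀ k, 0 ≤ u k) (hu : Summable u) (r : ℝ) (hr : 0 < r)
    (g : ℕ → ℤ → ℝ)
    (hg : ∀ l, ∃ s : ℕ, ∃ b : ℝ, (∀ k, |g l k| ^ r ≤ b) ∧ ∀ k, (s : ℤ) ≤ |k| → g l k = 0) :
    ∃ y : ℤ → ℝ, Summable (fun k => |y k| ^ r * u k) ∧ ∃ A : ℕ → Set ℕ,
      (∀ l, 0 < lowerDensity (A l)) ∧
      ∀ ε > 0, ∃ l0, ∀ l, l0 ≤ l → ∀ n ∈ A l, ∀ F : Finset ℤ,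
        ∑ k ∈ F, |y (k + n) - g l k| ^ r * u k ≤ ε := by
  choose s b hb hs using hg
  have hb0 : ∀ l, 0 ≤ b l := fun l => le_trans (by positivity) (hb l 0)
  have hM : ∀ l, ∃ M : ℕ, l + 1 ≤ M ∧ ∀ F : Finset ℤ, (∀ k ∈ F, (M : ℤ) ≤ |k|) →
      b l * ∑ k ∈ F, u k ≤ (1 / 2) ^ l := by
    intro l
    have hbl := hb0 l
    obtain ⟨M, hM⟩ := tail_small u hu ((1 / 2) ^ l / (b l + 1)) (by positivity)
    refine ⟨M + l + 1, by omega, fun F hF => ?_⟩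
    have h1 := hM F fun k hk => by
      have := hF k hk
      push_cast at this
      linarith [Int.natCast_nonneg l]
    have h2 : 0 ≤ ∑ k ∈ F, u k := Finset.sum_nonneg fun k _ => hu0 k
    rw [lt_div_iff₀ (by positivity)] at h1
    nlinarith
  choose M hMl hM using hM
  let H : ℤ → ℝ := fun k => ∑ l ∈ Finset.range (k.natAbs + 1), if (M l : ℤ) ≤ |k| then b l else 0
  have hterm : ∀ l (k : ℤ), 0 ≤ (if (M l : ℤ) ≤ |k| then b l else 0) := by
    intro l k; split_ifs; exacts [hb0 l, le_rfl]
  have hH0 : ∀ k, 0 ≤ H k := fun k => Finset.sum_nonneg fun l _ => hterm l k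
  have hHb : ∀ l (k : ℤ), (M l : ℤ) ≤ |k| → b l ≤ H k := by
    intro l k hk
    have hl : l ∈ Finset.range (k.natAbs + 1) := by
      rw [Finset.mem_range]
      rw [Int.abs_eq_natAbs] at hk
      have h3 : M l ≤ k.natAbs := by exact_mod_cast hk
      have := hMl l
      omega
    have := Finset.single_le_sum (f := fun l => if (M l : ℤ) ≤ |k| then b l else 0)
      (fun l _ => hterm l k) hl
    rwa [if_pos hk] at this
  have hHs : Summable (fun k => H k * u k) := by
    refine summable_of_sum_le (c := 2) (fun k => mul_nonneg (hH0 k) (hu0 k)) fun F => ?_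
    set L := F.sup Int.natAbs + 1 with hL
    calc ∑ k ∈ F, H k * u k
        ≤ ∑ k ∈ F, (∑ l ∈ Finset.range L, if (M l : ℤ) ≤ |k| then b l else 0) * u k := by
          refine Finset.sum_le_sum fun k hk => mul_le_mul_of_nonneg_right ?_ (hu0 k)
          refine Finset.sum_le_sum_of_subset_of_nonneg ?_ fun l _ _ => hterm l k
          have := Finset.le_sup (f := Int.natAbs) hk
          exact Finset.range_mono (by omega)
      _ = ∑ l ∈ Finset.range L, b l * ∑ k ∈ F.filter (fun k => (M l : ℤ) ≤ |k|), u k := by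
          simp_rw [Finset.sum_mul]
          rw [Finset.sum_comm]
          refine Finset.sum_congr rfl fun l _ => ?_
          rw [Finset.mul_sum, Finset.sum_filter]
          refine Finset.sum_congr rfl fun k _ => ?_
          split_ifs <;> simp
      _ ≤ ∑ l ∈ Finset.range L, (1 / 2 : ℝ) ^ l := by
          refine Finset.sum_le_sum fun l _ => hM l _ fun k hk => (Finset.mem_filter.1 hk).2
      _ ≤ 2 := sum_geometric_two_le _
  obtain ⟨n, lev, hsep, hnN, hdens⟩ := sep (fun l => s l + M l) (fun l => by have := hMl l; omega)
  let Q : ℤ → ℕ → Prop := fun m j => |m - n j| < s (lev j)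
  let y : ℤ → ℝ := fun m => if h : ∃ j, Q m j then g (lev h.choose) (m - n h.choose) else 0
  have hy : ∀ m, y m = 0 ∨ ∃ j, Q m j ∧ y m = g (lev j) (m - n j) := by
    intro m
    by_cases h : ∃ j, Q m j
    · right
      exact ⟨h.choose, h.choose_spec, by simp only [y]; rw [dif_pos h]⟩
    · left; simp only [y]; rw [dif_neg h]
  have huniq : ∀ m i j, Q m i → Q m j → i = j := by
    intro m i j hi hj
    by_contra hij
    have h1 := hsep i j hij
    have h2 : |(n i : ℤ) - n j| ≤ |m - n i| + |m - n j| := by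
      have := abs_sub_le (n i : ℤ) m (n j)
      rwa [abs_sub_comm (n i : ℤ) m] at this
    simp only [Q] at hi hj
    push_cast at h1
    have := Int.natCast_nonneg (M (lev i))
    have := Int.natCast_nonneg (M (lev j))
    linarith
  have hyQ : ∀ m j, Q m j → y m = g (lev j) (m - n j) := by
    intro m j hj
    have h : ∃ j, Q m j := ⟨j, hj⟩
    have e := huniq m _ _ h.choose_spec hj
    simp only [y]; rw [dif_pos h, e]
  refine ⟨y, ?_, fun l => {m | ∃ j, lev j = l ∧ n j = m}, hdens, ?_⟩
  · refine Summable.of_nonneg_of_le (fun k => mul_nonneg (by positivity) (hu0 k))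
      (fun k => mul_le_mul_of_nonneg_right ?_ (hu0 k)) hHs
    rcases hy k with h | ⟨j, hj, h⟩
    · rw [h, abs_zero, Real.zero_rpow hr.ne']; exact hH0 k
    · rw [h]
      refine (hb _ _).trans (hHb _ _ ?_)
      have h1 := hnN j
      have h2 : ((s (lev j) : ℤ) + M (lev j)) ≤ n j := by exact_mod_cast h1
      have h3 := abs_lt.1 (show |k - n j| < s (lev j) from hj)
      have := le_abs_self k
      linarith
  · intro ε hε
    obtain ⟨l0, hl0⟩ := tail_small _ hHs ε hε
    refine ⟨l0, ?_⟩
    rintro l hl _ ⟨j, rfl, rfl⟩ F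
    have hle : ∀ k : ℤ, |y (k + n j) - g (lev j) k| ^ r * u k ≤
        if (l0 : ℤ) ≤ |k| then H k * u k else 0 := by
      intro k
      have hnn : 0 ≤ (if (l0 : ℤ) ≤ |k| then H k * u k else 0) := by
        split_ifs; exacts [mul_nonneg (hH0 k) (hu0 k), le_rfl]
      by_cases hk : |k| < s (lev j)
      · have := hyQ (k + n j) j (by simpa [Q] using hk)
        rw [this]
        simpa [Real.zero_rpow hr.ne'] using hnn
      · rw [hs _ k (not_lt.1 hk), sub_zero]
        rcases hy (k + n j) with h | ⟨i, hi, h⟩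
        · rw [h]
          simpa [Real.zero_rpow hr.ne'] using hnn
        · have hij : i ≠ j := by
            rintro rfl
            exact hk (by simpa [Q] using hi)
          have h1 := hsep i j hij
          push_cast at h1
          have h2 : |(n i : ℤ) - n j| ≤ |k + n j - n i| + |k| := by
            have := abs_sub_le (n i : ℤ) (k + n j) (n j)
            rw [abs_sub_comm (n i : ℤ) (k + n j)] at this
            simpa using this
          have h3 : |k + n j - n i| < s (lev i) := hi
          have h4 := Int.natCast_nonneg (M (lev i))
          have h4' := Int.natCast_nonneg (M (lev j))
          have h5 := Int.natCast_nonneg (s (lev j))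
          have h6 : (l0 : ℤ) ≤ M (lev j) := by
            have := hMl (lev j)
            exact_mod_cast (by omega : l0 ≤ M (lev j))
          rw [if_pos (by linarith), h]
          exact mul_le_mul_of_nonneg_right ((hb _ _).trans (hHb _ _ (by linarith))) (hu0 k)
    refine (Finset.sum_le_sum fun k _ => hle k).trans ?_
    rw [← Finset.sum_filter]
    exact (hl0 _ fun k hk => (Finset.mem_filter.1 hk).2).le

theorem exists_W (w : ℤ → ℝ) (hw : ∀ n, 0 < w n) :
    ∃ W : ℤ → ℝ, (∀ k, 0 < W k) ∧ W 0 = 1 ∧ ∀ k, W (k + 1) = w (k + 1) * W k := by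
  let W : ℤ → ℝ := fun k => (∏ i ∈ Finset.range k.toNat, w (i + 1)) *
    (∏ i ∈ Finset.range (-k).toNat, w (-i))⁻¹
  refine ⟨W, fun k => ?_, by simp [W], fun k => ?_⟩
  · exact mul_pos (Finset.prod_pos fun i _ => hw _) (inv_pos.2 (Finset.prod_pos fun i _ => hw _))
  · rcases le_or_gt 0 k with hk | hk
    · lift k to ℕ using hk
      have e1 : ((k:ℤ) + 1).toNat = k + 1 := by omega
      have e2 : (-((k:ℤ) + 1)).toNat = 0 := by omega
      have e3 : (-(k:ℤ)).toNat = 0 := by omega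
      simp only [W, e1, e2, e3, Int.toNat_natCast, Finset.prod_range_succ]
      ring
    · obtain ⟨m, rfl⟩ : ∃ m : ℕ, k = -((m:ℤ) + 1) := ⟨(-k - 1).toNat, by omega⟩
      have e1 : (-((m:ℤ) + 1)).toNat = 0 := by omega
      have e2 : (-((m:ℤ) + 1) + 1).toNat = 0 := by omega
      have e3 : (-(-((m:ℤ) + 1) + 1)).toNat = m := by omega
      have e4 : (- -((m:ℤ) + 1)).toNat = m + 1 := by omega
      have e5 : (-((m:ℤ) + 1) + 1) = -(m:ℤ) := by ring
      simp only [W, e1, e2, e3, e4, Finset.prod_range_succ]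
      rw [e5]
      have := (hw (-(m:ℤ))).ne'
      have h2 : (∏ i ∈ Finset.range m, w (-(i:ℤ))) ≠ 0 := (Finset.prod_pos fun i _ => hw _).ne'
      field_simp

/-- iterates of a (forward or backward) weighted shift -/
theorem iterate_shift (p : ℝ≥0∞) [hp : Fact (1 ≤ p)] (W : ℤ → ℝ) (s : ℤ)
    (R : lp (fun _ : ℤ => ℝ) p →L[ℝ] lp (fun _ : ℤ => ℝ) p)
    (hR : ∀ (x : lp (fun _ : ℤ => ℝ) p) (k : ℤ), W k * R x k = W (k + s) * x (k + s))
    (n : ℕ) (x : lp (fun _ : ℤ => ℝ) p) (k : ℤ) :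
    W k * (R ^ n) x k = W (k + s * n) * x (k + s * n) := by
  induction n generalizing k with
  | zero => simp
  | succ n ih =>
    rw [pow_succ', ContinuousLinearMap.mul_apply, hR, ih]
    have : k + s + s * n = k + s * ((n + 1 : ℕ) : ℤ) := by push_cast; ring
    rw [this]

theorem necessity (p : ℝ≥0∞) [hp : Fact (1 ≤ p)] (hp' : p ≠ ⊤) (W : ℤ → ℝ) (hW : ∀ k, 0 < W k)
    (hW0 : W 0 = 1) (hWK : ∀ m : ℤ, ∃ Q : ℝ, ∀ k, W (k + m) ≤ Q * W k)
    (s : ℤ) (hs : s * s = 1)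
    (R : lp (fun _ : ℤ => ℝ) p →L[ℝ] lp (fun _ : ℤ => ℝ) p)
    (hR : ∀ (x : lp (fun _ : ℤ => ℝ) p) (k : ℤ), W k * R x k = W (k + s) * x (k + s))
    (hF : ∃ x, freqHCVec R x) : Summable (fun k => (W k)⁻¹ ^ p.toReal) := by
  have hp1 : 1 ≤ p := hp.out
  have hp0 : p ≠ 0 := (lt_of_lt_of_le one_pos hp1).ne'
  have hr : 0 < p.toReal := ENNReal.toReal_pos hp0 hp'
  obtain ⟨x, hx⟩ := hF
  let e : lp (fun _ : ℤ => ℝ) p := lp.single p 0 (1:ℝ)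
  have he : ‖e‖ = 1 := by
    have := lp.norm_single (E := fun _ : ℤ => ℝ) (lt_of_lt_of_le one_pos hp1) 0 (1:ℝ)
    simpa using this
  have he0 : e 0 = 1 := by simp [e, lp.single_apply]
  let A : Set ℕ := {n : ℕ | (R ^ n) x ∈ Metric.ball e (1/2)}
  have hA : 0 < lowerDensity A :=
    hx _ Metric.isOpen_ball ⟨e, Metric.mem_ball_self (by norm_num)⟩
  obtain ⟨d, hd, hdA⟩ := (lowerDensity_pos_iff A).1 hA
  have hAy : ∀ n ∈ A, 1 / 2 ≤ W (s * n) * x (s * n) := by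
    intro n hn
    have h1 : ‖(R ^ n) x - e‖ < 1 / 2 := by
      rw [← dist_eq_norm]; exact hn
    have h2 := lp.norm_apply_le_norm hp0 ((R ^ n) x - e) 0
    have h3 := iterate_shift p W s R hR n x 0
    rw [hW0, one_mul, zero_add] at h3
    rw [lp.coeFn_sub, Pi.sub_apply, he0, h3, Real.norm_eq_abs] at h2
    have := (abs_le.1 (h2.trans h1.le)).1
    linarith
  have hAn : ∀ n ∈ A, ‖(R ^ n) x‖ ≤ 2 := by
    intro n hn
    have h1 : ‖(R ^ n) x - e‖ < 1 / 2 := by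
      rw [← dist_eq_norm]; exact hn
    have := norm_le_norm_add_norm_sub' ((R ^ n) x) e
    linarith
  have hmain : Summable (fun k => (W (s * k))⁻¹ ^ p.toReal) := by
    refine comb (fun N => ((Finset.range (N+1)).filter (· ∈ A)).image (fun n : ℕ => (n : ℤ)))
      ?_ d hd ?_ _ (fun k => ?_) (4 ^ p.toReal) ?_ ?_
    · intro N z hz
      obtain ⟨n, hn, rfl⟩ := Finset.mem_image.1 hz
      have := Finset.mem_range.1 (Finset.mem_filter.1 hn).1
      rw [Finset.mem_Icc]; constructor <;> omega
    · filter_upwards [hdA] with N hN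
      rwa [Finset.card_image_of_injective _ Nat.cast_injective]
    · exact Real.rpow_nonneg (inv_nonneg.2 (hW _).le) _
    · intro N z hz
      obtain ⟨n, hn, rfl⟩ := Finset.mem_image.1 hz
      have hnA : n ∈ A := (Finset.mem_filter.1 hn).2
      rw [Finset.sum_image (by intro a _ b _ h; exact Nat.cast_injective h)]
      set G := (Finset.range (N+1)).filter (· ∈ A) with hG
      have hinj : Set.InjOn (fun m : ℕ => s * ((m:ℤ) - n)) (G : Set ℕ) := by
        intro a _ b _ h
        have h' : s * (s * ((a:ℤ) - n)) = s * (s * ((b:ℤ) - n)) := congrArg (s * ·) h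
        rw [← mul_assoc, ← mul_assoc, hs] at h'
        have : (a:ℤ) = b := by linarith
        exact_mod_cast this
      have h1 := lp.sum_rpow_le_norm_rpow hr ((R ^ n) x) (G.image (fun m : ℕ => s * ((m:ℤ) - n)))
      rw [Finset.sum_image hinj] at h1
      have h2 : ‖(R ^ n) x‖ ^ p.toReal ≤ 2 ^ p.toReal :=
        Real.rpow_le_rpow (norm_nonneg _) (hAn n hnA) hr.le
      have h3 : ∀ m ∈ G, (1 / 2 : ℝ) ^ p.toReal * (W (s * ((m:ℤ) - n)))⁻¹ ^ p.toReal
          ≤ ‖(R ^ n) x (s * ((m:ℤ) - n))‖ ^ p.toReal := by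
        intro m hm
        have hmA : m ∈ A := (Finset.mem_filter.1 hm).2
        have hWp := hW (s * ((m:ℤ) - n))
        rw [← Real.mul_rpow (by norm_num) (inv_nonneg.2 hWp.le)]
        refine Real.rpow_le_rpow (by positivity) ?_ hr.le
        have h4 := iterate_shift p W s R hR n x (s * ((m:ℤ) - n))
        have e1 : s * ((m:ℤ) - n) + s * n = s * m := by ring
        rw [e1] at h4
        have h5 := hAy m hmA
        rw [← h4] at h5
        refine le_trans ?_ (le_abs_self _)
        rw [← div_eq_mul_inv, div_le_iff₀ hWp, mul_comm]
        exact h5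
      have h6 := (Finset.sum_le_sum h3).trans (h1.trans h2)
      rw [← Finset.mul_sum] at h6
      have e4 : (4:ℝ) ^ p.toReal = 2 ^ p.toReal * 2 ^ p.toReal := by
        rw [← Real.mul_rpow (by norm_num) (by norm_num)]; norm_num
      have e5 : (1 / 2 : ℝ) ^ p.toReal * 2 ^ p.toReal = 1 := by
        rw [← Real.mul_rpow (by norm_num) (by norm_num)]; norm_num
      have hpos : (0:ℝ) < 2 ^ p.toReal := by positivity
      rw [e4]
      calc _ = ((1 / 2 : ℝ) ^ p.toReal * 2 ^ p.toReal) *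
            ∑ m ∈ G, (W (s * ((m:ℤ) - n)))⁻¹ ^ p.toReal := by rw [e5, one_mul]
        _ = ((1 / 2 : ℝ) ^ p.toReal * 
            ∑ m ∈ G, (W (s * ((m:ℤ) - n)))⁻¹ ^ p.toReal) * 2 ^ p.toReal := by ring
        _ ≤ _ := mul_le_mul_of_nonneg_right h6 hpos.le
    · intro m
      obtain ⟨Q, hQ⟩ := hWK (s * m)
      refine ⟨|Q| ^ p.toReal, fun k => ?_⟩
      rw [← Real.mul_rpow (abs_nonneg _) (inv_nonneg.2 (hW _).le)]
      refine Real.rpow_le_rpow (inv_nonneg.2 (hW _).le) ?_ hr.le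
      have h1 := hQ (s * k)
      rw [← mul_add] at h1
      have h2 : W (s * (k + m)) ≤ |Q| * W (s * k) :=
        h1.trans (mul_le_mul_of_nonneg_right (le_abs_self Q) (hW _).le)
      rw [← div_eq_mul_inv, le_div_iff₀ (hW _), ← div_eq_inv_mul, div_le_iff₀ (hW _)]
      exact h2
  have hinj : Function.Injective (fun k : ℤ => s * k) := by
    intro a b h
    have h' : s * (s * a) = s * (s * b) := congrArg (s * ·) h
    rwa [← mul_assoc, ← mul_assoc, hs, one_mul, one_mul] at h'
  have := hmain.comp_injective hinj
  refine this.congr fun k => ?_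
  simp only [Function.comp]
  rw [← mul_assoc, hs, one_mul]

theorem sufficiency (p : ℝ≥0∞) [hp : Fact (1 ≤ p)] (hp' : p ≠ ⊤) (W : ℤ → ℝ) (hW : ∀ k, 0 < W k)
    (s : ℤ) (hs : s * s = 1)
    (R : lp (fun _ : ℤ => ℝ) p →L[ℝ] lp (fun _ : ℤ => ℝ) p)
    (hR : ∀ (x : lp (fun _ : ℤ => ℝ) p) (k : ℤ), W k * R x k = W (k + s) * x (k + s))
    (hsum : Summable (fun k => (W k)⁻¹ ^ p.toReal)) : ∃ x, freqHCVec R x := by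
  have hp1 : 1 ≤ p := hp.out
  have hp0 : p ≠ 0 := (lt_of_lt_of_le one_pos hp1).ne'
  have hr : 0 < p.toReal := ENNReal.toReal_pos hp0 hp'
  have hss : ∀ k : ℤ, s * (s * k) = k := fun k => by rw [← mul_assoc, hs, one_mul]
  have hinj : Function.Injective (fun k : ℤ => s * k) := by
    intro a b h
    have h' : s * (s * a) = s * (s * b) := congrArg (s * ·) h
    rwa [hss, hss] at h'
  obtain ⟨f, hf⟩ := exists_surjective_nat (ℤ →₀ ℚ)
  have hu0 : ∀ k : ℤ, 0 ≤ (W (s * k))⁻¹ ^ p.toReal :=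
    fun k => Real.rpow_nonneg (inv_nonneg.2 (hW _).le) _
  obtain ⟨y, hy, A, hA, hyA⟩ := core (fun k => (W (s * k))⁻¹ ^ p.toReal) hu0
    (hsum.comp_injective hinj) p.toReal hr
    (fun l k => W (s * k) * (f l.unpair.1 (s * k) : ℝ)) (by
      intro l
      set v := f l.unpair.1
      have hv : ∀ k : ℤ, s * k ∉ v.support → (v (s * k) : ℝ) = 0 := by
        intro k hk
        rw [Finsupp.notMem_support_iff.1 hk]; simp
      refine ⟨(v.support.image (fun k => s * k)).sup Int.natAbs + 1,
        ∑ k ∈ v.support, |W k * (v k : ℝ)| ^ p.toReal, fun k => ?_, fun k hk => ?_⟩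
      · by_cases h : s * k ∈ v.support
        · exact Finset.single_le_sum (f := fun k => |W k * (v k : ℝ)| ^ p.toReal)
            (fun i _ => by positivity) h
        · rw [hv k h, mul_zero, abs_zero, Real.zero_rpow hr.ne']
          exact Finset.sum_nonneg fun i _ => by positivity
      · rw [hv k, mul_zero]
        intro h
        have h1 : k ∈ v.support.image (fun k => s * k) :=
          Finset.mem_image.2 ⟨s * k, h, hss k⟩
        have h2 := Finset.le_sup (f := Int.natAbs) h1
        rw [Int.abs_eq_natAbs] at hk
        have h3 : (v.support.image (fun k => s * k)).sup Int.natAbs + 1 ≤ k.natAbs := by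
          exact_mod_cast hk
        omega)
  have habs : ∀ (a : ℝ) (k : ℤ), |a| ^ p.toReal * (W k)⁻¹ ^ p.toReal = ‖a / W k‖ ^ p.toReal := by
    intro a k
    rw [← Real.mul_rpow (abs_nonneg _) (inv_nonneg.2 (hW _).le), Real.norm_eq_abs, abs_div,
      abs_of_pos (hW k), div_eq_mul_inv]
  have hmem : Memℓp (fun m : ℤ => y (s * m) / W m) p := by
    refine memℓp_gen ?_
    refine (hy.comp_injective hinj).congr fun k => ?_
    simp only [Function.comp]
    rw [hss, habs]
  let x : lp (fun _ : ℤ => ℝ) p := ⟨_, hmem⟩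
  have hx : ∀ m, x m = y (s * m) / W m := fun m => rfl
  refine ⟨x, fun U hU hUne => ?_⟩
  obtain ⟨z, hz⟩ := hUne
  obtain ⟨ε, hε, hball⟩ := Metric.isOpen_iff.1 hU z hz
  -- finite approximation
  obtain ⟨F, hF⟩ : ∃ F : Finset ℤ, ‖∑ i ∈ F, lp.single p i (z i) - z‖ < ε / 3 := by
    have h1 := lp.hasSum_single hp' z
    obtain ⟨F, hF⟩ := (Metric.tendsto_nhds.1 h1 (ε / 3) (by positivity)).exists
    exact ⟨F, by rwa [dist_eq_norm] at hF⟩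
  have hq : ∀ i : ℤ, ∃ q : ℚ, |(q : ℝ) - z i| < ε / 3 / (F.card + 1) := by
    intro i
    have hpos : 0 < ε / 3 / ((F.card : ℝ) + 1) := by positivity
    obtain ⟨q, h1, h2⟩ := exists_rat_btwn (lt_add_of_pos_right (z i) hpos)
    exact ⟨q, by rw [abs_lt]; constructor <;> linarith⟩
  choose q hq using hq
  let v : ℤ →₀ ℚ := Finsupp.onFinset F (fun i => if i ∈ F then q i else 0) (by
    intro a ha; by_contra h; simp [h] at ha)
  have hv : ∀ i, v i = if i ∈ F then q i else 0 := fun i => rfl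
  let V : lp (fun _ : ℤ => ℝ) p := ∑ i ∈ F, lp.single p i (q i : ℝ)
  have hV : ∀ k, V k = (v k : ℝ) := by
    intro k
    simp only [V]
    rw [lp.coeFn_sum, Finset.sum_apply]
    simp only [lp.single_apply, Pi.single_apply]
    rw [Finset.sum_ite_eq, hv]
    split_ifs <;> simp
  have hVz : ‖V - ∑ i ∈ F, lp.single p i (z i)‖ ≤ ε / 3 := by
    simp only [V]
    rw [← Finset.sum_sub_distrib]
    refine (norm_sum_le _ _).trans ?_
    have : ∀ i ∈ F, ‖(lp.single p i (q i : ℝ) - lp.single p i (z i) : lp (fun _ : ℤ => ℝ) p)‖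
        ≤ ε / 3 / (F.card + 1) := by
      intro i _
      have e1 : (lp.single p i (q i : ℝ) - lp.single p i (z i) : lp (fun _ : ℤ => ℝ) p)
          = lp.single p i ((q i : ℝ) - z i) := by
        rw [lp.single_sub]
      rw [e1, lp.norm_single (lt_of_lt_of_le one_pos hp1)]
      exact (hq i).le
    refine (Finset.sum_le_card_nsmul _ _ _ this).trans ?_
    rw [nsmul_eq_mul, mul_div_assoc', div_le_iff₀ (by positivity)]
    nlinarith
  obtain ⟨i, hi⟩ := hf v
  obtain ⟨l0, hl0⟩ := hyA ((ε / 3) ^ p.toReal) (by positivity)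
  have hl : l0 ≤ Nat.pair i l0 := Nat.right_le_pair i l0
  have hsub : A (Nat.pair i l0) ⊆ {n : ℕ | (R ^ n) x ∈ U} := by
    intro n hn
    have h1 := hl0 _ hl n hn
    simp only [Nat.unpair_pair, hi] at h1
    have h2 : ‖(R ^ n) x - V‖ ≤ ε / 3 := by
      refine lp.norm_le_of_forall_sum_le hr (by positivity) fun G => ?_
      refine le_trans (le_of_eq ?_) (h1 (G.image (fun k => s * k)))
      rw [Finset.sum_image hinj.injOn]
      refine Finset.sum_congr rfl fun k _ => ?_
      rw [hss, habs]
      congr 2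
      have h4 := iterate_shift p W s R hR n x k
      rw [hx, mul_div_cancel₀ _ (hW _).ne', mul_add, hss] at h4
      rw [lp.coeFn_sub, Pi.sub_apply, hV, eq_div_iff (hW k).ne', ← h4]
      ring
    apply hball
    rw [Metric.mem_ball, dist_eq_norm]
    have : (R ^ n) x - z = ((R ^ n) x - V) + (V - ∑ i ∈ F, lp.single p i (z i))
        + (∑ i ∈ F, lp.single p i (z i) - z) := by abel
    rw [this]
    refine (norm_add₃_le).trans_lt ?_
    linarith
  obtain ⟨d, hd, hdA⟩ := (lowerDensity_pos_iff _).1 (hA (Nat.pair i l0))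
  refine (lowerDensity_pos_iff _).2 ⟨d, hd, ?_⟩
  filter_upwards [hdA] with N hN
  refine hN.trans ?_
  have : ((Finset.range (N+1)).filter (· ∈ A (Nat.pair i l0))).card ≤
      ((Finset.range (N+1)).filter (· ∈ {n : ℕ | (R ^ n) x ∈ U})).card := by
    refine Finset.card_le_card fun m hm => ?_
    rw [Finset.mem_filter] at hm ⊢
    exact ⟨hm.1, hsub hm.2⟩
  exact_mod_cast this

theorem ratio_bound (w W : ℤ → ℝ) (hw : ∀ n, 0 < w n) (C c : ℝ) (hc : 0 < c)
    (hwc : ∀ n, c ≤ w n) (hC : ∀ n, w n ≤ C) (hW : ∀ k, 0 < W k)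
    (hWs : ∀ k, W (k + 1) = w (k + 1) * W k) (m : ℤ) :
    ∃ Q : ℝ, ∀ k, W (k + m) ≤ Q * W k := by
  have hC0 : 0 < C := (hw 0).trans_le (hC 0)
  induction m using Int.induction_on with
  | zero => exact ⟨1, fun k => by simp⟩
  | succ i ih =>
    obtain ⟨Q, hQ⟩ := ih
    refine ⟨C * Q, fun k => ?_⟩
    rw [← add_assoc, hWs, mul_assoc]
    exact mul_le_mul (hC _) (hQ k) (hW _).le hC0.le
  | pred i ih =>
    obtain ⟨Q, hQ⟩ := ih
    refine ⟨c⁻¹ * Q, fun k => ?_⟩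
    have h1 := hWs (k + (-(i:ℤ) - 1))
    have e : k + (-(i:ℤ) - 1) + 1 = k + -(i:ℤ) := by ring
    rw [e] at h1
    have h2 := hQ k
    rw [h1] at h2
    rw [mul_assoc, ← div_eq_inv_mul, le_div_iff₀ hc, mul_comm]
    exact (mul_le_mul_of_nonneg_right (hwc _) (hW _).le).trans h2

theorem stmt8 (p : ℝ≥0∞) [hp : Fact (1 ≤ p)] (hp' : p ≠ ⊤)
    (w : ℤ → ℝ) (hw : ∀ n, 0 < w n) (C c : ℝ) (hc : 0 < c)
    (hwc : ∀ n, c ≤ w n) (hC : ∀ n, w n ≤ C)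
    (T S : lp (fun _ : ℤ => ℝ) p →L[ℝ] lp (fun _ : ℤ => ℝ) p)
    (hT : ∀ (x : lp (fun _ : ℤ => ℝ) p) (k : ℤ), (T x : ∀ _ : ℤ, ℝ) k = w (k+1) * (x : ∀ _ : ℤ, ℝ) (k+1))
    (hS : ∀ (x : lp (fun _ : ℤ => ℝ) p) (k : ℤ), (S x : ∀ _ : ℤ, ℝ) k = (w k)⁻¹ * (x : ∀ _ : ℤ, ℝ) (k-1))
    (hTS : T.comp S = ContinuousLinearMap.id ℝ _)
    (hST : S.comp T = ContinuousLinearMap.id ℝ _) :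
    (∃ x, freqHCVec T x) ↔ (∃ x, freqHCVec S x) := by
  obtain ⟨W, hW, hW0, hWs⟩ := exists_W w hw
  have hWK := ratio_bound w W hw C c hc hwc hC hW hWs
  have hRT : ∀ (x : lp (fun _ : ℤ => ℝ) p) (k : ℤ), W k * T x k = W (k + 1) * x (k + 1) := by
    intro x k
    rw [hT, hWs]; ring
  have hRS : ∀ (x : lp (fun _ : ℤ => ℝ) p) (k : ℤ), W k * S x k = W (k + -1) * x (k + -1) := by
    intro x k
    have h1 := hWs (k - 1)
    rw [sub_add_cancel] at h1
    rw [hS, h1, ← sub_eq_add_neg]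
    have := (hw k).ne'
    field_simp
  constructor
  · intro h
    exact sufficiency p hp' W hW (-1) (by norm_num) S hRS
      (necessity p hp' W hW hW0 hWK 1 (by norm_num) T hRT h)
  · intro h
    exact sufficiency p hp' W hW 1 (by norm_num) T hRT
      (necessity p hp' W hW hW0 hWK (-1) (by norm_num) S hRS h)
end

section
/- Every frequently hypercyclic unilateral weighted backward shift on ℓ^p(ℤ₊) (or c₀(ℤ₊)) is distributionally chaotic. -/
open Filter Topology
open scoped Classical ENNReal

/-- Cesaro averages of a real sequence. -/
noncomputable def cavg (f : ℕ → ℝ) (n : ℕ) : ℝ := (∑ i ∈ Finset.range (n+1), f i) / (n+1)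

/-- A bounded real sequence. -/
def Bd (f : ℕ → ℝ) : Prop := ∃ M : ℝ, ∀ n, |f n| ≤ M

lemma Bd.add {f g : ℕ → ℝ} (hf : Bd f) (hg : Bd g) : Bd (fun n => f n + g n) := by
  obtain ⟨M, hM⟩ := hf
  obtain ⟨N, hN⟩ := hg
  exact ⟨M + N, fun n => (abs_add_le _ _).trans (add_le_add (hM n) (hN n))⟩

lemma Bd.const (c : ℝ) : Bd (fun _ => c) := ⟨|c|, fun _ => le_rfl⟩

lemma Bd.mul {f g : ℕ → ℝ} (hf : Bd f) (hg : Bd g) : Bd (fun n => f n * g n) := by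
  obtain ⟨M, hM⟩ := hf
  obtain ⟨N, hN⟩ := hg
  refine ⟨M * N, fun n => ?_⟩
  rw [abs_mul]
  exact mul_le_mul (hM n) (hN n) (abs_nonneg _) ((abs_nonneg _).trans (hM n))

lemma Bd.sum {ι : Type*} (s : Finset ι) {f : ι → ℕ → ℝ} (hf : ∀ i ∈ s, Bd (f i)) :
    Bd (fun n => ∑ i ∈ s, f i n) := by
  induction s using Finset.induction_on with
  | empty => simpa using Bd.const 0
  | insert a s ha ih =>
    simp only [Finset.sum_insert ha]
    exact (hf a (by simp)).add (ih fun i hi => hf i (by simp [hi]))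

lemma Bd.shift {f : ℕ → ℝ} (hf : Bd f) (d : ℕ) : Bd (fun n => f (n + d)) := by
  obtain ⟨M, hM⟩ := hf
  exact ⟨M, fun n => hM _⟩

lemma cavg_abs_le {f : ℕ → ℝ} {M : ℝ} (hM : ∀ n, |f n| ≤ M) (n : ℕ) : |cavg f n| ≤ M := by
  unfold cavg
  have h1 : (0:ℝ) < n + 1 := by positivity
  rw [abs_div, abs_of_pos h1, div_le_iff₀ h1]
  refine (Finset.abs_sum_le_sum_abs _ _).trans ?_
  refine (Finset.sum_le_sum fun i _ => hM i).trans ?_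
  simp [mul_comm]

/-- A shift-invariant mean on bounded sequences. -/
structure IsMean (L : (ℕ → ℝ) → ℝ) : Prop where
  tends : ∀ f, Bd f → Tendsto (cavg f) (hyperfilter ℕ : Filter ℕ) (𝓝 (L f))

lemma exists_mean : ∃ L : (ℕ → ℝ) → ℝ, IsMean L := by
  have : ∀ f : ℕ → ℝ, ∃ l : ℝ, Bd f → Tendsto (cavg f) (hyperfilter ℕ : Filter ℕ) (𝓝 l) := by
    intro f
    by_cases hf : Bd f
    · obtain ⟨M, hM⟩ := hf
      obtain ⟨l, -, hl⟩ := (isCompact_Icc (a := -M) (b := M)).ultrafilter_le_nhds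
        ((hyperfilter ℕ).map (cavg f)) (by
          rw [le_principal_iff]
          exact Filter.mem_map.2 (Filter.univ_mem' fun n => abs_le.1 (cavg_abs_le hM n)))
      exact ⟨l, fun _ => hl⟩
    · exact ⟨0, fun h => absurd h hf⟩
  choose L hL using this
  exact ⟨L, ⟨hL⟩⟩

namespace IsMean
variable {L : (ℕ → ℝ) → ℝ}

lemma add (hL : IsMean L) {f g : ℕ → ℝ} (hf : Bd f) (hg : Bd g) :
    L (fun n => f n + g n) = L f + L g := by
  refine tendsto_nhds_unique (hL.tends _ (hf.add hg)) ?_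
  refine ((hL.tends _ hf).add (hL.tends _ hg)).congr fun n => ?_
  simp [cavg, Finset.sum_add_distrib, add_div]

lemma const (hL : IsMean L) (c : ℝ) : L (fun _ => c) = c := by
  refine tendsto_nhds_unique (hL.tends _ (Bd.const c)) ?_
  refine tendsto_const_nhds.congr fun n => ?_
  have h1 : (0:ℝ) < n + 1 := by positivity
  simp [cavg]; field_simp

lemma const_mul (hL : IsMean L) (c : ℝ) {f : ℕ → ℝ} (hf : Bd f) :
    L (fun n => c * f n) = c * L f := by
  refine tendsto_nhds_unique (hL.tends _ ((Bd.const c).mul hf)) ?_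
  refine ((hL.tends _ hf).const_mul c).congr fun n => ?_
  simp only [cavg]
  rw [← Finset.mul_sum, mul_div_assoc]

lemma mono (hL : IsMean L) {f g : ℕ → ℝ} (hf : Bd f) (hg : Bd g) (h : ∀ n, f n ≤ g n) :
    L f ≤ L g := by
  refine le_of_tendsto_of_tendsto' (hL.tends _ hf) (hL.tends _ hg) fun n => ?_
  unfold cavg
  gcongr
  exact h _

lemma sum (hL : IsMean L) {ι : Type*} (s : Finset ι) {f : ι → ℕ → ℝ} (hf : ∀ i ∈ s, Bd (f i)) :
    L (fun n => ∑ i ∈ s, f i n) = ∑ i ∈ s, L (f i) := by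
  induction s using Finset.induction_on with
  | empty => simpa using hL.const 0
  | insert a s ha ih =>
    simp only [Finset.sum_insert ha]
    rw [hL.add (hf a (by simp)) (Bd.sum s fun i hi => hf i (by simp [hi])),
      ih fun i hi => hf i (by simp [hi])]

lemma shift_one (hL : IsMean L) {f : ℕ → ℝ} (hf : Bd f) : L (fun n => f (n + 1)) = L f := by
  have h := (hL.tends _ (hf.shift 1)).sub (hL.tends _ hf)
  rw [← sub_eq_zero]
  refine tendsto_nhds_unique h ?_
  obtain ⟨M, hM⟩ := hf
  refine Tendsto.mono_left ?_ Nat.hyperfilter_le_atTop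
  have hlim : Tendsto (fun n : ℕ => (2 * M) * (1 / ((n:ℝ) + 1))) atTop (𝓝 0) := by
    simpa using (tendsto_one_div_add_atTop_nhds_zero_nat (𝕜 := ℝ)).const_mul (2 * M)
  refine squeeze_zero_norm (fun n => ?_) hlim
  have h1 : (0:ℝ) < n + 1 := by positivity
  have : cavg (fun n => f (n + 1)) n - cavg f n = (f (n+1) - f 0) / (n + 1) := by
    unfold cavg
    rw [← sub_div, ← Finset.sum_sub_distrib, Finset.sum_range_sub]
  rw [this, Real.norm_eq_abs, abs_div, abs_of_pos h1, mul_one_div]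
  gcongr
  calc |f (n+1) - f 0| ≤ |f (n+1)| + |f 0| := abs_sub _ _
    _ ≤ 2 * M := by linarith [hM (n+1), hM 0]

lemma shift (hL : IsMean L) {f : ℕ → ℝ} (hf : Bd f) (d : ℕ) : L (fun n => f (n + d)) = L f := by
  induction d with
  | zero => rfl
  | succ d ih =>
    rw [← ih, ← hL.shift_one (hf.shift d)]
    congr 1
    funext n
    congr 1
    omega

end IsMean

/-- The real indicator function. -/
noncomputable def ind (A : Set ℕ) (n : ℕ) : ℝ := if n ∈ A then 1 else 0

lemma ind_nonneg (A : Set ℕ) (n : ℕ) : 0 ≤ ind A n := by unfold ind; split_ifs <;> norm_num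
lemma ind_le_one (A : Set ℕ) (n : ℕ) : ind A n ≤ 1 := by unfold ind; split_ifs <;> norm_num
lemma ind_bd (A : Set ℕ) : Bd (ind A) :=
  ⟨1, fun n => by rw [abs_of_nonneg (ind_nonneg A n)]; exact ind_le_one A n⟩

lemma ratio_nonneg (A : Set ℕ) (n : ℕ) :
    0 ≤ (((Finset.range (n+1)).filter (· ∈ A)).card : ℝ) / (n+1) := by positivity

lemma ratio_le_one (A : Set ℕ) (n : ℕ) :
    (((Finset.range (n+1)).filter (· ∈ A)).card : ℝ) / (n+1) ≤ 1 := by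
  rw [div_le_one (by positivity)]
  have := Finset.card_filter_le (Finset.range (n+1)) (· ∈ A)
  rw [Finset.card_range] at this
  exact_mod_cast this

lemma mean_ind_ge {L : (ℕ → ℝ) → ℝ} (hL : IsMean L) {A : Set ℕ} {δ : ℝ}
    (hδ : δ < lowerDensity A) : δ ≤ L (ind A) := by
  refine ge_of_tendsto (hL.tends _ (ind_bd A)) ?_
  have h := eventually_lt_of_lt_liminf hδ
    (isBoundedUnder_of ⟨0, fun n => ratio_nonneg A n⟩)
  refine (h.filter_mono Nat.hyperfilter_le_atTop).mono fun n hn => ?_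
  refine hn.le.trans (le_of_eq ?_)
  unfold cavg ind
  rw [Finset.sum_boole]

/-- Correlations of a set of positive mean are large on a syndetic set. -/
lemma syndetic {L : (ℕ → ℝ) → ℝ} (hL : IsMean L) {A : Set ℕ} {δ : ℝ} (hδ : 0 < δ)
    (hA : δ ≤ L (ind A)) :
    ∃ l : ℕ, ∀ d : ℕ, ∃ k ≤ l, δ ^ 2 / 2 ≤ L (fun m => ind A m * ind A (m + (d + k))) := by
  by_contra! hcon
  choose g hg using hcon
  let e : ℕ → ℕ := fun n => Nat.rec 0 (fun _ x => g x + x) n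
  have e_succ : ∀ n, e (n+1) = g (e n) + e n := fun n => rfl
  have emono : Monotone e := monotone_nat_of_le_succ fun n => by rw [e_succ]; omega
  have hcorr : ∀ i j, i < j → L (fun m => ind A (m + e i) * ind A (m + e j)) ≤ δ^2/2 := by
    intro i j hij
    obtain ⟨n, rfl⟩ : ∃ n, j = n + 1 := ⟨j - 1, by omega⟩
    have h1 : e i ≤ e n := emono (by omega)
    have h2 := hg (e n) (e n - e i) (by omega)
    have hb : Bd (fun m => ind A m * ind A (m + (g (e n) + (e n - e i)))) :=
      (ind_bd A).mul ((ind_bd A).shift _)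
    rw [← hL.shift hb (e i)] at h2
    refine le_of_eq_of_le ?_ h2.le
    congr 1
    funext m
    congr 2
    rw [e_succ]
    omega
  have hcorr' : ∀ i j, L (fun m => ind A (m + e i) * ind A (m + e j))
      ≤ δ^2/2 + if i = j then 1 else 0 := by
    intro i j
    rcases lt_trichotomy i j with h | h | h
    · rw [if_neg h.ne, add_zero]; exact hcorr i j h
    · rw [if_pos h]
      have : L (fun m => ind A (m + e i) * ind A (m + e j)) ≤ L (fun _ => 1) :=
        hL.mono (((ind_bd A).shift _).mul ((ind_bd A).shift _)) (Bd.const 1) fun m =>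
          mul_le_one₀ (ind_le_one _ _) (ind_nonneg _ _) (ind_le_one _ _)
      rw [hL.const] at this
      have := sq_nonneg δ
      linarith
    · rw [if_neg h.ne', add_zero]
      refine le_of_eq_of_le ?_ (hcorr j i h)
      congr 1
      funext m
      ring
  have key : ∀ k : ℕ, (k:ℝ)^2 * δ^2 ≤ k + k^2 * (δ^2/2) := by
    intro k
    have hbi : ∀ i, Bd (fun m => ind A (m + e i)) := fun i => (ind_bd A).shift _
    have hs : Bd (fun m => ∑ i ∈ Finset.range k, ind A (m + e i)) :=
      Bd.sum _ fun i _ => hbi i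
    have hss : Bd (fun m => ∑ i ∈ Finset.range k, ∑ j ∈ Finset.range k,
        ind A (m + e i) * ind A (m + e j)) :=
      Bd.sum _ fun i _ => Bd.sum _ fun j _ => (hbi i).mul (hbi j)
    have hm := hL.mono ((Bd.const (2 * (k * δ))).mul hs) (hss.add (Bd.const ((k*δ)^2))) (by
      intro m
      rw [← Finset.sum_mul_sum]
      nlinarith [sq_nonneg ((∑ i ∈ Finset.range k, ind A (m + e i)) - k * δ)])
    rw [hL.const_mul _ hs, hL.add hss (Bd.const _), hL.const, hL.sum _ (fun i _ => hbi i),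
      hL.sum _ (fun i _ => Bd.sum _ fun j _ => (hbi i).mul (hbi j))] at hm
    have h1 : ∀ i, L (fun m => ind A (m + e i)) = L (ind A) := fun i => hL.shift (ind_bd A) _
    have h2 : ∀ i ∈ Finset.range k, L (fun m => ∑ j ∈ Finset.range k,
        ind A (m + e i) * ind A (m + e j)) ≤ k * (δ^2/2) + 1 := by
      intro i hi
      rw [hL.sum _ (fun j _ => (hbi i).mul (hbi j))]
      refine (Finset.sum_le_sum fun j _ => hcorr' i j).trans ?_
      rw [Finset.sum_add_distrib, Finset.sum_ite_eq, if_pos hi]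
      simp
    have h3 := Finset.sum_le_sum h2
    simp only [h1, Finset.sum_const, Finset.card_range, nsmul_eq_mul] at hm h3
    have h4 : 2 * (k * δ) * (k * δ) ≤ 2 * (k * δ) * (k * L (ind A)) := by gcongr
    nlinarith
  obtain ⟨k, hk⟩ := exists_nat_gt (2 / δ^2)
  have hkpos : (0:ℝ) < k := lt_of_le_of_lt (by positivity) hk
  rw [div_lt_iff₀ (by positivity)] at hk
  nlinarith [key k, mul_lt_mul_of_pos_left hk hkpos]

lemma summable_of_corr {A : Set ℕ} (hA : 0 < lowerDensity A) {v : ℕ → ℝ} (hv : ∀ d, 0 ≤ v d)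
    {C : ℝ} (hC : ∀ d, v d ≤ C * v (d+1)) {K : ℝ}
    (hK : ∀ F : Finset ℕ, ∀ m ∈ A, ∑ d ∈ F, ind A (m + d) * v d ≤ K) : Summable v := by
  obtain ⟨L, hL⟩ := exists_mean
  obtain ⟨δ, hδ, hδA⟩ := exists_between hA
  obtain ⟨l, hl⟩ := syndetic hL hδ (mean_ind_ge hL hδA)
  have hb : ∀ d, Bd (fun m => ind A m * ind A (m + d)) := fun d =>
    (ind_bd A).mul ((ind_bd A).shift _)
  set r : ℕ → ℝ := fun d => L (fun m => ind A m * ind A (m + d)) with hr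
  have hr0 : ∀ d, 0 ≤ r d := by
    intro d
    have := hL.mono (Bd.const 0) (hb d) fun m => mul_nonneg (ind_nonneg _ _) (ind_nonneg _ _)
    rwa [hL.const] at this
  have hsum : Summable (fun d => v d * r d) := by
    refine summable_of_sum_le (c := max K 0) (fun d => mul_nonneg (hv d) (hr0 d)) fun F => ?_
    have h1 : ∀ d ∈ F, Bd (fun m => v d * (ind A m * ind A (m + d))) :=
      fun d _ => (Bd.const _).mul (hb d)
    have h2 := hL.mono (Bd.sum F h1) (Bd.const (max K 0)) (by
      intro m
      by_cases hm : m ∈ A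
      · refine le_trans (le_of_eq ?_) ((hK F m hm).trans (le_max_left _ _))
        refine Finset.sum_congr rfl fun d _ => ?_
        simp [ind, hm]
      · refine le_trans (le_of_eq ?_) (le_max_right _ _)
        refine Finset.sum_eq_zero fun d _ => ?_
        simp [ind, hm])
    rw [hL.const, hL.sum F h1] at h2
    refine le_of_eq_of_le ?_ h2
    refine Finset.sum_congr rfl fun d _ => ?_
    rw [hL.const_mul _ (hb d)]
  set M := max C 1 with hM
  have hM1 : 1 ≤ M := le_max_right _ _
  have hpow : ∀ k d, v d ≤ M ^ k * v (d + k) := by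
    intro k
    induction k with
    | zero => intro d; simp
    | succ k ih =>
      intro d
      calc v d ≤ M ^ k * v (d + k) := ih d
        _ ≤ M ^ k * (M * v (d + k + 1)) := by
          gcongr
          exact (hC _).trans (mul_le_mul_of_nonneg_right (le_max_left _ _) (hv _))
        _ = M ^ (k+1) * v (d + (k+1)) := by rw [pow_succ, mul_assoc, add_assoc]
  have hsum2 : Summable (fun d => M ^ l * (2 / δ^2) *
      ∑ k ∈ Finset.range (l+1), v (d + k) * r (d + k)) := by
    refine Summable.mul_left _ (summable_sum fun k _ => ?_)
    exact (summable_nat_add_iff k).2 hsum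
  refine Summable.of_nonneg_of_le hv (fun d => ?_) hsum2
  obtain ⟨k, hk, hkr⟩ := hl d
  have h1 : 1 ≤ 2 / δ^2 * r (d + k) := by
    have : 2 / δ^2 * (δ^2/2) ≤ 2 / δ^2 * r (d + k) := by gcongr
    refine le_trans (le_of_eq ?_) this
    field_simp
  calc v d ≤ M ^ k * v (d + k) := hpow k d
    _ ≤ M ^ l * v (d + k) := by gcongr; exact hv _
    _ ≤ M ^ l * (v (d + k) * (2 / δ^2 * r (d + k))) := by
      gcongr
      exact le_mul_of_one_le_right (hv _) h1
    _ = M ^ l * (2 / δ^2) * (v (d + k) * r (d + k)) := by ring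
    _ ≤ _ := by
      gcongr
      exact Finset.single_le_sum (f := fun k => v (d + k) * r (d + k))
        (fun i _ => mul_nonneg (hv _) (hr0 _)) (by simp; omega)

lemma upperDensity_eq_one {S : Set ℕ} (s t : ℕ → ℕ) (hst : ∀ k, (k+1) * (s k + 1) ≤ t k)
    (hS : ∀ k n, s k ≤ n → n < t k → n ∈ S) : upperDensity S = 1 := by
  unfold upperDensity
  have hbd : IsBoundedUnder (· ≤ ·) atTop
      (fun n : ℕ => (((Finset.range (n+1)).filter (· ∈ S)).card : ℝ) / (n+1)) :=
    isBoundedUnder_of ⟨1, fun n => ratio_le_one S n⟩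
  have hbd' : IsBoundedUnder (· ≥ ·) atTop
      (fun n : ℕ => (((Finset.range (n+1)).filter (· ∈ S)).card : ℝ) / (n+1)) :=
    isBoundedUnder_of ⟨0, fun n => ratio_nonneg S n⟩
  refine le_antisymm (limsup_le_of_le hbd'.isCoboundedUnder_le
    (Eventually.of_forall fun n => ratio_le_one S n)) ?_
  refine le_of_forall_lt_imp_le_of_dense fun c hc => ?_
  refine le_limsup_of_frequently_le ?_ hbd
  rw [frequently_atTop]
  intro N
  obtain ⟨k0, hk0⟩ := exists_nat_one_div_lt (sub_pos.2 hc)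
  set k := max N k0 with hk
  have hk1 : 1 / ((k:ℝ) + 1) ≤ 1 - c := by
    refine le_trans ?_ hk0.le
    gcongr
    exact le_max_right _ _
  have h1 := hst k
  have h2 : k + 1 ≤ t k := le_trans (Nat.le_mul_of_pos_right _ (by omega)) h1
  have h3 : s k + 1 ≤ t k := le_trans (Nat.le_mul_of_pos_left _ (by omega)) h1
  have hN : N ≤ k := le_max_left _ _
  refine ⟨t k - 1, by omega, ?_⟩
  have h4 : t k - 1 + 1 = t k := by omega
  have h5 : ((t k - 1 : ℕ) : ℝ) + 1 = t k := by exact_mod_cast h4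
  rw [h4, h5]
  have htpos : (0:ℝ) < t k := by exact_mod_cast (by omega : 0 < t k)
  rw [le_div_iff₀ htpos]
  have hcard : t k - s k ≤ ((Finset.range (t k)).filter (· ∈ S)).card := by
    rw [← Nat.card_Ico]
    refine Finset.card_le_card fun n hn => ?_
    rw [Finset.mem_Ico] at hn
    rw [Finset.mem_filter, Finset.mem_range]
    exact ⟨hn.2, hS k n hn.1 hn.2⟩
  have hcard' : (t k : ℝ) - s k ≤ (((Finset.range (t k)).filter (· ∈ S)).card : ℝ) := by
    have : t k ≤ ((Finset.range (t k)).filter (· ∈ S)).card + s k := by omega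
    have : (t k : ℝ) ≤ (((Finset.range (t k)).filter (· ∈ S)).card : ℝ) + s k := by
      exact_mod_cast this
    linarith
  refine le_trans ?_ hcard'
  have h6 : ((k:ℝ) + 1) * (s k + 1) ≤ t k := by exact_mod_cast h1
  have h7 : (s k : ℝ) ≤ (1 - c) * t k := by
    have : (s k : ℝ) ≤ 1 / ((k:ℝ)+1) * t k := by
      rw [one_div, inv_mul_eq_div, le_div_iff₀ (by positivity)]
      have : (0:ℝ) ≤ k + 1 := by positivity
      nlinarith
    exact this.trans (by gcongr)
  linarith

lemma tail_small_s14 {p : ℝ≥0∞} [hp : Fact (1 ≤ p)] (hp' : p ≠ ⊤) (b : lp (fun _ : ℕ => ℝ) p)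
    {ε : ℝ} (hε : 0 < ε) :
    ∃ R : ℕ, ∀ f : lp (fun _ : ℕ => ℝ) p, (∀ i, i < R → (f : ∀ _ : ℕ, ℝ) i = 0) →
      (∀ i, |(f : ∀ _ : ℕ, ℝ) i| ≤ |(b : ∀ _ : ℕ, ℝ) i|) → ‖f‖ ≤ ε := by
  have h := (lp.hasSum_single hp' b).tendsto_sum_nat
  rw [Metric.tendsto_atTop] at h
  obtain ⟨R, hR⟩ := h ε hε
  refine ⟨R, fun f hf0 hfb => ?_⟩
  have h1 := hR R le_rfl
  rw [dist_comm, dist_eq_norm] at h1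
  refine le_trans ?_ h1.le
  have hp0 : p ≠ 0 := (lt_of_lt_of_le one_pos hp.out).ne'
  refine lp.norm_mono hp0 fun i => ?_
  by_cases hi : i < R
  · rw [hf0 i hi]; simp
  · rw [lp.coeFn_sub, Pi.sub_apply, lp.coeFn_sum, Finset.sum_apply, Finset.sum_eq_zero]
    · simpa using hfb i
    · intro j hj
      rw [lp.single_apply, Pi.single_apply, if_neg]
      rintro rfl
      exact hi (Finset.mem_range.1 hj)

section shift
variable {p : ℝ≥0∞} [hp : Fact (1 ≤ p)]
  {w : ℕ → ℝ} {T : lp (fun _ : ℕ => ℝ) p →L[ℝ] lp (fun _ : ℕ => ℝ) p}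

/-- Products of weights. -/
noncomputable def wprod (w : ℕ → ℝ) (n : ℕ) : ℝ := ∏ i ∈ Finset.range n, w (i + 1)

lemma wprod_pos (hw : ∀ n, 0 < w n) (n : ℕ) : 0 < wprod w n := Finset.prod_pos fun _ _ => hw _

lemma wprod_succ (n : ℕ) : wprod w (n+1) = wprod w n * w (n+1) := Finset.prod_range_succ _ _

lemma shift_pow_apply (hT : ∀ (x : lp (fun _ : ℕ => ℝ) p) (k : ℕ),
      (T x : ∀ _ : ℕ, ℝ) k = w (k+1) * (x : ∀ _ : ℕ, ℝ) (k+1)) (m : ℕ)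
    (x : lp (fun _ : ℕ => ℝ) p) (j : ℕ) :
    ((T ^ m) x : ∀ _ : ℕ, ℝ) j * wprod w j = wprod w (m + j) * (x : ∀ _ : ℕ, ℝ) (m + j) := by
  induction m generalizing x with
  | zero => simp [mul_comm]
  | succ m ih =>
    rw [pow_succ, ContinuousLinearMap.mul_apply, ih (T x), hT, ← mul_assoc, ← wprod_succ]
    have : m + 1 + j = m + j + 1 := by omega
    rw [this]

lemma summable_weights (hp' : p ≠ ⊤) (hw : ∀ n, 0 < w n) (C : ℝ) (hC : ∀ n, w n ≤ C)
    (hT : ∀ (x : lp (fun _ : ℕ => ℝ) p) (k : ℕ),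
      (T x : ∀ _ : ℕ, ℝ) k = w (k+1) * (x : ∀ _ : ℕ, ℝ) (k+1))
    (hFHC : ∃ x, freqHCVec T x) : Summable (fun n => ((wprod w n)⁻¹) ^ p.toReal) := by
  obtain ⟨x, hx⟩ := hFHC
  have hp0 : p ≠ 0 := (lt_of_lt_of_le one_pos hp.out).ne'
  have hpr : 0 < p.toReal := ENNReal.toReal_pos hp0 hp'
  set e : lp (fun _ : ℕ => ℝ) p := lp.single p 0 (1:ℝ) with he
  have he1 : ‖e‖ = 1 := by
    rw [he, lp.norm_single (pos_iff_ne_zero.2 hp0)]; simp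
  set A : Set ℕ := {n : ℕ | (T ^ n) x ∈ Metric.ball e (1/2)} with hA
  have hAd : 0 < lowerDensity A := hx _ Metric.isOpen_ball ⟨e, Metric.mem_ball_self (by norm_num)⟩
  have hA1 : ∀ n ∈ A, ‖(T ^ n) x‖ ≤ 3/2 := by
    intro n hn
    have h1 : ‖(T ^ n) x - e‖ < 1/2 := by rw [← dist_eq_norm]; exact hn
    have h2 := norm_sub_norm_le ((T ^ n) x) e
    linarith
  have hA2 : ∀ n ∈ A, 1/2 ≤ wprod w n * (x : ∀ _ : ℕ, ℝ) n := by
    intro n hn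
    have h1 : ‖(T ^ n) x - e‖ < 1/2 := by rw [← dist_eq_norm]; exact hn
    have h2 := lp.norm_apply_le_norm hp0 ((T ^ n) x - e) 0
    have h3 := shift_pow_apply hT n x 0
    rw [lp.coeFn_sub, Pi.sub_apply, he, lp.single_apply_self, Real.norm_eq_abs] at h2
    simp only [wprod, Finset.range_zero, Finset.prod_empty, mul_one, add_zero] at h3
    have h4 := (abs_lt.1 (h2.trans_lt h1)).1
    unfold wprod
    linarith
  have hinv : ∀ d, 0 < (wprod w d)⁻¹ := fun d => inv_pos.2 (wprod_pos hw d)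
  refine summable_of_corr hAd (C := C ^ p.toReal) (K := 3 ^ p.toReal)
    (fun d => Real.rpow_nonneg (hinv d).le _) (fun d => ?_) fun F m hm => ?_
  · have hC0 : 0 ≤ C := (hw 0).le.trans (hC 0)
    rw [← Real.mul_rpow hC0 (hinv _).le]
    refine Real.rpow_le_rpow (hinv _).le ?_ hpr.le
    rw [wprod_succ, mul_inv, mul_left_comm]
    refine le_mul_of_one_le_right (hinv _).le ?_
    rw [← div_eq_mul_inv, one_le_div (hw _)]
    exact hC _
  · have h1 := lp.sum_rpow_le_norm_rpow hpr ((2:ℝ) • (T ^ m) x) F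
    have h2 : ‖(2:ℝ) • (T ^ m) x‖ ≤ 3 := by
      rw [norm_smul, Real.norm_eq_abs, abs_two]
      linarith [hA1 m hm]
    refine le_trans ?_ (h1.trans (Real.rpow_le_rpow (norm_nonneg _) h2 hpr.le))
    refine Finset.sum_le_sum fun d _ => ?_
    by_cases hd : m + d ∈ A
    · simp only [ind, if_pos hd, one_mul]
      refine Real.rpow_le_rpow (hinv _).le ?_ hpr.le
      refine le_trans ?_ (le_abs_self _)
      rw [lp.coeFn_smul, Pi.smul_apply, smul_eq_mul, inv_le_iff_one_le_mul₀ (wprod_pos hw d),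
        mul_assoc, shift_pow_apply hT]
      linarith [hA2 _ hd]
    · simp only [ind, if_neg hd, zero_mul]
      exact Real.rpow_nonneg (norm_nonneg _) _

end shift

/-- Starting points of the blocks. -/
def blockS (R : ℕ → ℕ) : ℕ → ℕ
  | 0 => R 0
  | k + 1 => (k+1) * ((k+1) * (blockS R k + 1) + 1) + R (k+1)

theorem stmt14 (p : ℝ≥0∞) [hp : Fact (1 ≤ p)] (hp' : p ≠ ⊤)
    (w : ℕ → ℝ) (hw : ∀ n, 0 < w n) (C : ℝ) (hC : ∀ n, w n ≤ C)
    (T : lp (fun _ : ℕ => ℝ) p →L[ℝ] lp (fun _ : ℕ => ℝ) p)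
    (hT : ∀ (x : lp (fun _ : ℕ => ℝ) p) (k : ℕ),
      (T x : ∀ _ : ℕ, ℝ) k = w (k+1) * (x : ∀ _ : ℕ, ℝ) (k+1))
    (hFHC : ∃ x, freqHCVec T x) :
    ∃ x : lp (fun _ : ℕ => ℝ) p, ∃ A B : Set ℕ, upperDensity A = 1 ∧ upperDensity B = 1 ∧
      Tendsto (fun n : ℕ => (T ^ n) x) (atTop ⊓ 𝓟 A) (nhds 0) ∧
      Tendsto (fun n : ℕ => ‖(T ^ n) x‖) (atTop ⊓ 𝓟 B) atTop := by

  have hp0 : p ≠ 0 := (lt_of_lt_of_le one_pos hp.out).ne'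
  have hsum := summable_weights hp' hw C hC hT hFHC
  have hWpos := wprod_pos hw
  have hinv : ∀ d, 0 < (wprod w d)⁻¹ := fun d => inv_pos.2 (hWpos d)
  have hbmem : Memℓp (fun n => (wprod w n)⁻¹) p := memℓp_gen (by
    refine hsum.congr fun n => ?_
    rw [Real.norm_eq_abs, abs_of_pos (hinv n)])
  let b : lp (fun _ : ℕ => ℝ) p := ⟨fun n => (wprod w n)⁻¹, hbmem⟩
  have hb : ∀ n, (b : ∀ _ : ℕ, ℝ) n = (wprod w n)⁻¹ := fun n => rfl
  have htail : ∀ l : ℕ, ∃ R : ℕ, ∀ f : lp (fun _ : ℕ => ℝ) p,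
      (∀ i, i < R → (f : ∀ _ : ℕ, ℝ) i = 0) →
      (∀ i, |(f : ∀ _ : ℕ, ℝ) i| ≤ |(b : ∀ _ : ℕ, ℝ) i|) → ‖f‖ ≤ (1/4:ℝ)^l / (l+1) :=
    fun l => tail_small_s14 hp' b (by positivity)
  choose R hR using htail
  obtain ⟨s, hs⟩ : ∃ s, s = blockS R := ⟨_, rfl⟩
  obtain ⟨t, ht⟩ : ∃ t : ℕ → ℕ, ∀ k, t k = (k+1) * (s k + 1) := ⟨_, fun k => rfl⟩
  obtain ⟨u, hu⟩ : ∃ u : ℕ → ℕ, ∀ k, u k = (k+1) * (t k + 1) := ⟨_, fun k => rfl⟩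
  have hs0 : s 0 = R 0 := by rw [hs]; rfl
  have hss : ∀ k, s (k+1) = u k + R (k+1) := by
    intro k; rw [hu, ht, hs]; rfl
  have hst : ∀ k, s k + 1 ≤ t k := fun k => by
    rw [ht]; exact Nat.le_mul_of_pos_left _ (by omega)
  have htu : ∀ k, t k + 1 ≤ u k := fun k => by
    rw [hu]; exact Nat.le_mul_of_pos_left _ (by omega)
  have htm : Monotone t := monotone_nat_of_le_succ fun k => by
    have := hst (k+1); have := htu k; have := hss k; omega
  have hum : Monotone u := monotone_nat_of_le_succ fun k => by
    have := hst (k+1); have := htu (k+1); have := hss k; omega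
  have hus : ∀ k l, k < l → u k + R l ≤ s l := by
    intro k l hkl
    obtain ⟨n, rfl⟩ : ∃ n, l = n + 1 := ⟨l - 1, by omega⟩
    rw [hss]
    have : u k ≤ u n := hum (by omega)
    omega
  have hRs : ∀ l, R l ≤ s l := by
    intro l
    rcases l with _ | l
    · rw [hs0]
    · rw [hss]; omega
  let zf : ℕ → ℕ → ℝ := fun l i => if s l ≤ i ∧ i < t l then (wprod w i)⁻¹ else 0
  have hzf : ∀ l i, ‖zf l i‖ ≤ (wprod w i)⁻¹ := by
    intro l i
    simp only [zf]
    split_ifs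
    · rw [Real.norm_eq_abs, abs_of_pos (hinv i)]
    · simpa using (hinv i).le
  let z : ℕ → lp (fun _ : ℕ => ℝ) p := fun l => ⟨zf l, hbmem.mono (hzf l)⟩
  have hz : ∀ l i, (z l : ∀ _ : ℕ, ℝ) i = if s l ≤ i ∧ i < t l then (wprod w i)⁻¹ else 0 :=
    fun l i => rfl
  have hTz : ∀ m l j, ((T ^ m) (z l) : ∀ _ : ℕ, ℝ) j =
      if s l ≤ m + j ∧ m + j < t l then (wprod w j)⁻¹ else 0 := by
    intro m l j
    have h1 := shift_pow_apply hT m (z l) j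
    rw [hz] at h1
    split_ifs at h1 ⊢
    · rw [mul_inv_cancel₀ (hWpos _).ne'] at h1
      exact eq_inv_of_mul_eq_one_left h1
    · rw [mul_zero] at h1
      exact (mul_eq_zero.1 h1).resolve_right (hWpos _).ne'
  have hTz_small : ∀ m l, m + R l ≤ s l → ‖(T ^ m) (z l)‖ ≤ (1/4:ℝ)^l / (l+1) := by
    intro m l hml
    refine hR l _ (fun i hi => ?_) (fun i => ?_)
    · rw [hTz, if_neg]; omega
    · rw [hTz, hb]
      split_ifs
      · exact le_rfl
      · simp
  have hTz_zero : ∀ m l, t l ≤ m → (T ^ m) (z l) = 0 := by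
    intro m l hml
    refine lp.ext (funext fun j => ?_)
    rw [hTz, if_neg (by omega)]
    rfl
  have hTz_small' : ∀ m l, m + R l ≤ s l → ‖((l:ℝ)+1) • (T ^ m) (z l)‖ ≤ (1/4:ℝ)^l := by
    intro m l hml
    have h0 : (0:ℝ) < l + 1 := by positivity
    rw [norm_smul, Real.norm_eq_abs, abs_of_pos h0, mul_comm]
    exact (le_div_iff₀ h0).1 (hTz_small m l hml)
  have hsumz : Summable (fun l : ℕ => ((l:ℝ)+1) • z l) := by
    refine Summable.of_norm_bounded (g := fun l : ℕ => (1/4:ℝ)^l)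
      (summable_geometric_of_lt_one (by norm_num) (by norm_num)) fun l => ?_
    simpa using hTz_small' 0 l (by simpa using hRs l)
  obtain ⟨y, hy⟩ := hsumz
  have hTy : ∀ m, HasSum (fun l : ℕ => ((l:ℝ)+1) • (T ^ m) (z l)) ((T ^ m) y) := by
    intro m
    simpa using hy.mapL (T ^ m)
  refine ⟨y, {m | ∃ k, t k ≤ m ∧ m < u k}, {m | ∃ k, s k ≤ m ∧ m < t k},
    upperDensity_eq_one t u (fun k => (hu k).ge) (fun k n h1 h2 => ⟨k, h1, h2⟩),
    upperDensity_eq_one s t (fun k => (ht k).ge) (fun k n h1 h2 => ⟨k, h1, h2⟩), ?_, ?_⟩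
  · rw [Metric.tendsto_nhds]
    intro ε hε
    obtain ⟨K, hK⟩ := exists_pow_lt_of_lt_one (half_pos hε) (by norm_num : (1/2:ℝ) < 1)
    rw [eventually_inf_principal]
    filter_upwards [eventually_ge_atTop (u K)] with m hm
    rintro ⟨k, hk1, hk2⟩
    have hkK : K ≤ k := by
      by_contra! h
      have := hum h.le
      omega
    have hgeo : HasSum (fun l : ℕ => (1/2:ℝ)^k * (1/2:ℝ)^l) ((1/2:ℝ)^k * 2) :=
      hasSum_geometric_two.mul_left _
    have hbound : ‖(T ^ m) y‖ ≤ (1/2:ℝ)^k * 2 := by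
      rw [← (hTy m).tsum_eq]
      refine tsum_of_norm_bounded hgeo fun l => ?_
      rcases le_or_gt l k with hl | hl
      · rw [hTz_zero m l ((htm hl).trans hk1), smul_zero, norm_zero]
        positivity
      · refine (hTz_small' m l (by have := hus k l hl; omega)).trans ?_
        have h4 : (1/4:ℝ)^l = (1/2:ℝ)^l * (1/2:ℝ)^l := by rw [← mul_pow]; norm_num
        rw [h4]
        gcongr ?_ * _
        exact pow_le_pow_of_le_one (by norm_num) (by norm_num) hl.le
    have hkp : (1/2:ℝ)^k ≤ (1/2:ℝ)^K := pow_le_pow_of_le_one (by norm_num) (by norm_num) hkK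
    rw [dist_zero_right]
    linarith
  · rw [tendsto_atTop]
    intro M
    obtain ⟨K, hK⟩ := exists_nat_ge M
    rw [eventually_inf_principal]
    filter_upwards [eventually_ge_atTop (t K)] with m hm
    rintro ⟨k, hk1, hk2⟩
    have hkK : K ≤ k := by
      by_contra! h
      have := htm h.le
      omega
    have h1 : HasSum (fun l : ℕ => ((((l:ℝ)+1) • (T ^ m) (z l) : lp (fun _ : ℕ => ℝ) p) :
        ∀ _ : ℕ, ℝ) 0) (((T ^ m) y : ∀ _ : ℕ, ℝ) 0) :=
      (hTy m).mapL (lp.evalCLM ℝ (fun _ : ℕ => ℝ) p 0)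
    have h2 : ∀ l : ℕ, ((((l:ℝ)+1) • (T ^ m) (z l) : lp (fun _ : ℕ => ℝ) p) :
        ∀ _ : ℕ, ℝ) 0 = ((l:ℝ)+1) * if s l ≤ m + 0 ∧ m + 0 < t l then (wprod w 0)⁻¹ else 0 := by
      intro l
      rw [lp.coeFn_smul, Pi.smul_apply, smul_eq_mul, hTz]
    have h3 := le_hasSum h1 k fun l _ => by
      rw [h2]
      have := (hinv 0).le
      positivity
    rw [h2, if_pos ⟨hk1, hk2⟩] at h3
    have h4 : (wprod w 0)⁻¹ = 1 := by simp [wprod]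
    rw [h4, mul_one] at h3
    have h5 := lp.norm_apply_le_norm hp0 ((T ^ m) y) 0
    have h6 := le_abs_self (((T ^ m) y : ∀ _ : ℕ, ℝ) 0)
    rw [Real.norm_eq_abs] at h5
    have h7 : (K:ℝ) ≤ k := by exact_mod_cast hkK
    linarith
end
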